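/- For all m, n ≥ 1, the hexacarpet resistances satisfy the submultiplicative estimate R_{m+n} ≤ (4/3) · R_m · R_n. -/

import Mathlib

/-!
The proof bounds effective conductances, the reciprocals of the resistances, from below:
with `C_n = R_n⁻¹` it shows `C_m ≤ (4/3) R_n C_{m+n}`.

The energy of the hexacarpet graph is a sum of local energies over triangles (`energy_eq`), so it
splits along any intermediate subdivision. Let `h` be the equilibrium potential on `T_n`
(`equilibrium`). Cutting the hexagon along its spokes into the sector families `{0, 1}`, `{2, 5}`,
`{3, 4}` and folding every sector onto one reference triangle turns the currents of `h` into
three forms `F, G, H` (`cut`). Testing against glued potentials shows that the flux of `F` enters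
through the hexagon side `AB` and leaves through the spoke `AC`, while `G` carries the same flux
from `AC` to the other spoke `BC`. Dividing by the total flux `C_n` gives weighted averages
`μ, ν, ν'` of a potential `τ` over the three sides with
`(ν τ - μ τ)² + (ν' τ - ν τ)² ≤ (2 / C_n) E(τ)` by Cauchy–Schwarz (`traces`).

Let `f` be the equilibrium potential on `T_{m+n}`. A triangle `t` of `T_m` has six children, each
subdivided `n - 1` further times, and each child carries averages `μ, ν, ν'` of `f` over its three
sides. Every edge of `T_m` is made of two outer sides of children; the mean of the two values of
`μ` there, together with the mean over the three edges of each triangle, is a potential `g` on the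
graph of `T_m`. It does not depend on the triangle containing the edge, since `μ` sees only the
outer side. The two children that share a spoke have the same average on it, so differences of
edge values of `g` telescope into the increments bounded by `traces`, and summing the squares
gives `E_t(g) ≤ (4/3) R_n E_t(f)` on each triangle (`star_ineq`, `loc_le`).

As the averages of constants are exact, `g` is again `0` and `1` on the terminals (`coarse_side`),
hence `C_m ≤ E(g) ≤ (4/3) R_n E(f) = (4/3) R_n C_{m+n}` (`cond_mul_le`). This needs `C_n > 0`,
which holds for `n = 1` by inspection (`cond_one_pos`) and in general by induction with `n = 1`
in the estimate just proved.
-/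

/-!
Setup for the barycentric subdivision / hexacarpet resistance problem
(Begué, Kelleher, Nelson, Panzo, Pellico, Teplyaev, "Resistance scaling
and the number of spanning trees ..." / Barlow–Bass type estimates).

We realize the repeated barycentric subdivision of a triangle via its
hexagonal planar embedding: for `n ≥ 1` the complex `T_n` is embedded
in the plane with the seven vertices of `T_1` sent to the corners and
the center of a regular hexagon, and deeper subdivisions computed by
taking barycenters.  The `n`-th level triangles are recorded as ordered
triples of points of the plane.
-/

noncomputable section

namespace BarycentricHexacarpet

attribute [local instance] Classical.propDecidable

/-- Points of the plane. -/
abbrev Pt : Type := ℝ × ℝ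

/-- Barycenter of three points. -/
def bary (a b c : Pt) : Pt := (3:ℝ)⁻¹ • (a + b + c)

/-- Midpoint (barycenter of an edge). -/
def mpt (a b : Pt) : Pt := (2:ℝ)⁻¹ • (a + b)

/-- The six triangles of the barycentric subdivision of the triangle `(a,b,c)`,
each recorded as (vertex, barycenter of an edge containing it, barycenter). -/
def children : Pt × Pt × Pt → Set (Pt × Pt × Pt) := fun t =>
  {(t.1, mpt t.1 t.2.1, bary t.1 t.2.1 t.2.2), (t.2.1, mpt t.1 t.2.1, bary t.1 t.2.1 t.2.2),
   (t.2.1, mpt t.2.1 t.2.2, bary t.1 t.2.1 t.2.2), (t.2.2, mpt t.2.1 t.2.2, bary t.1 t.2.1 t.2.2),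
   (t.1, mpt t.1 t.2.2, bary t.1 t.2.1 t.2.2), (t.2.2, mpt t.1 t.2.2, bary t.1 t.2.1 t.2.2)}

/-- The corners of the regular hexagon: `p_0, p_0', p_1, p_1', p_2, p_2'`
are the corners with indices `0, 1, 2, 3, 4, 5`. -/
def hexCorner (i : ℕ) : Pt := (Real.cos (i * (Real.pi / 3)), Real.sin (i * (Real.pi / 3)))

/-- The set of (ordered) triangles of the `n`-th barycentric subdivision `T_n`
of the triangle, in the hexagonal embedding (defined for `n ≥ 1`):  the six
triangles of `T_1` are the six sectors of the regular hexagon, and each further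
subdivision is barycentric. -/
def TriSet : ℕ → Set (Pt × Pt × Pt)
  | 0 => ∅
  | 1 => {t | ∃ i : Fin 6, t = (hexCorner i, hexCorner (i + 1), ((0:ℝ), (0:ℝ)))}
  | (n + 2) => ⋃ t ∈ TriSet (n + 1), children t

/-- `E_n^2`: the 2-simplexes (triangles) of `T_n`, as 3-element vertex sets. -/
def Simp2 (n : ℕ) : Set (Set Pt) :=
  {s | ∃ t ∈ TriSet n, s = {t.1, t.2.1, t.2.2}}

/-- `E_n^1`: the 1-simplexes (edges) of `T_n`, as 2-element vertex sets. -/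
def Simp1 (n : ℕ) : Set (Set Pt) :=
  {s | ∃ t ∈ TriSet n, s = {t.1, t.2.1} ∨ s = {t.2.1, t.2.2} ∨ s = {t.1, t.2.2}}

/-- `E_n^0`: the 0-simplexes (vertices) of `T_n`. -/
def Simp0 (n : ℕ) : Set Pt :=
  {p | ∃ t ∈ TriSet n, p = t.1 ∨ p = t.2.1 ∨ p = t.2.2}

/-- Conductances of the 1-skeleton graph `G_n^T`:  vertices `p ≠ q` are adjacent
iff `{p,q}` is an edge of `T_n`; the conductance is `2` if the edge is contained
in exactly one triangle of `T_n`, and `1` if it is contained in two triangles. -/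
def cT (n : ℕ) (p q : Pt) : ℝ :=
  if p ≠ q ∧ ({p, q} : Set Pt) ∈ Simp1 n then
    (if {f ∈ Simp2 n | p ∈ f ∧ q ∈ f}.ncard = 1 then 2 else 1)
  else 0

/-- Conductances of the (modified) hexacarpet graph `G_n^H`:  its vertex set is
`E_n^2 ∪ E_n^1`, an edge `e ∈ E_n^1` is adjacent to a triangle `f ∈ E_n^2` iff
`e` is a face of `f`, and every edge of the graph has conductance `1/2`. -/
def cH (n : ℕ) (u v : Set Pt) : ℝ :=
  if (u ∈ Simp1 n ∧ v ∈ Simp2 n ∧ u ⊆ v) ∨ (v ∈ Simp1 n ∧ u ∈ Simp2 n ∧ v ⊆ u)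
  then 1 / 2 else 0

/-- The energy of a potential `f` on a weighted graph with conductances `c`:
`E(f) = (1/2) ∑ c p q * (f p - f q)^2`. -/
def energy {V : Type} (c : V → V → ℝ) (f : V → ℝ) : ℝ :=
  (1 / 2) * ∑' p : V, ∑' q : V, c p q * (f p - f q) ^ 2

/-- The effective resistance between `A` and `B`:
`R(A,B) = (inf {E(f) : f ≡ 0 on A, f ≡ 1 on B})⁻¹`. -/
def effRes {V : Type} (c : V → V → ℝ) (A B : Set V) : ℝ :=
  (sInf {e : ℝ | ∃ f : V → ℝ, (∀ p ∈ A, f p = 0) ∧ (∀ p ∈ B, f p = 1) ∧ e = energy c f})⁻¹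

/-- The `i`-th closed side of the hexagon. -/
def hexSide (i : ℕ) : Set Pt := segment ℝ (hexCorner i) (hexCorner (i + 1))

/-- `L_i^{(n,T)}`: the vertices of `G_n^T` whose geometric realization lies in
the `i`-th closed side of the hexagon. -/
def LsetT (n i : ℕ) : Set Pt := {p ∈ Simp0 n | p ∈ hexSide i}

/-- `L_i^{(n,H)}`: the vertices of `G_n^H` whose geometric realization lies in
the `i`-th closed side of the hexagon. -/
def LsetH (n i : ℕ) : Set (Set Pt) :=
  {v ∈ Simp2 n ∪ Simp1 n | convexHull ℝ v ⊆ hexSide i}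

/-- `R_n^T`: the effective resistance in `G_n^T` between
`A_{(n)}^T = L_2^{(n,T)}` and `B_{(n)}^T = L_5^{(n,T)}`. -/
def RT (n : ℕ) : ℝ := effRes (cT n) (LsetT n 2) (LsetT n 5)

/-- `R_n`: the effective resistance in `G_n^H` between
`A_{(n)}^H = L_0^{(n,H)} ∪ L_1^{(n,H)}` and `B_{(n)}^H = L_3^{(n,H)} ∪ L_4^{(n,H)}`. -/
def RH (n : ℕ) : ℝ :=
  effRes (cH n) (LsetH n 0 ∪ LsetH n 1) (LsetH n 3 ∪ LsetH n 4)

end BarycentricHexacarpet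

namespace BarycentricHexacarpet

/-! ### Subdivisions in affine charts -/

/-- Ordered triangles of the plane, as in `TriSet`. -/
abbrev Tri : Type := Pt × Pt × Pt
/-- Potentials, defined on all subsets of the plane; only the values at edges and triangles of
the subdivisions, encoded by their vertex sets, enter the energies. -/
abbrev Pot : Type := Set Pt → ℝ

/-- The six children of a triangle, in the order used by `children`. -/
def child (t : Tri) : Fin 6 → Tri :=
  ![(t.1, mpt t.1 t.2.1, bary t.1 t.2.1 t.2.2), (t.2.1, mpt t.1 t.2.1, bary t.1 t.2.1 t.2.2),
   (t.2.1, mpt t.2.1 t.2.2, bary t.1 t.2.1 t.2.2), (t.2.2, mpt t.2.1 t.2.2, bary t.1 t.2.1 t.2.2),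
   (t.1, mpt t.1 t.2.2, bary t.1 t.2.1 t.2.2), (t.2.2, mpt t.1 t.2.2, bary t.1 t.2.1 t.2.2)]

lemma mem_children (t s : Tri) : s ∈ children t ↔ ∃ i, s = child t i := by
  simp [children, child, Fin.exists_fin_succ]

lemma mpt_comm (a b : Pt) : mpt a b = mpt b a := by simp [mpt, add_comm]

/-- The vertex set of a triangle. -/
def st (t : Tri) : Set Pt := {t.1, t.2.1, t.2.2}

/-- The affine map taking the reference triangle onto `t`, vertex by vertex. -/
def aff (t : Tri) (x : Pt) : Pt := t.1 + x.1 • (t.2.1 - t.1) + x.2 • (t.2.2 - t.1)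

/-- The reference triangle. -/
def ref : Tri := ((0, 0), (1, 0), (0, 1))

/-- Image of a triangle under a map of the plane. -/
def mapT (F : Pt → Pt) (t : Tri) : Tri := (F t.1, F t.2.1, F t.2.2)

lemma mapT_ref (t : Tri) : mapT (aff t) ref = t := by
  ext <;> simp [mapT, aff, ref]

lemma child_map (t s : Tri) (i : Fin 6) :
    child (mapT (aff t) s) i = mapT (aff t) (child s i) := by
  fin_cases i <;> ext <;> simp [child, mapT, aff, mpt, bary] <;> ring

lemma aff_mapT (t s : Tri) (x : Pt) : aff (mapT (aff t) s) x = aff t (aff s x) := by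
  ext <;> simp [mapT, aff] <;> ring

lemma aff_child (t : Tri) (i : Fin 6) (x : Pt) :
    aff (child t i) x = aff t (aff (child ref i) x) := by
  rw [← aff_mapT, ← child_map, mapT_ref]

/-- Twice the signed area. -/
def det (t : Tri) : ℝ :=
  (t.2.1.1 - t.1.1) * (t.2.2.2 - t.1.2) - (t.2.1.2 - t.1.2) * (t.2.2.1 - t.1.1)

lemma det_child (t : Tri) (h : det t ≠ 0) (i : Fin 6) : det (child t i) ≠ 0 := by
  have : det (child t i) = det t / 6 ∨ det (child t i) = - (det t / 6) := by
    fin_cases i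
    · left; simp [child, det, mpt, bary]; ring
    · right; simp [child, det, mpt, bary]; ring
    · left; simp [child, det, mpt, bary]; ring
    · right; simp [child, det, mpt, bary]; ring
    · right; simp [child, det, mpt, bary]; ring
    · left; simp [child, det, mpt, bary]; ring
  rcases this with h1 | h1 <;> rw [h1] <;> simpa using h

lemma aff_inj (t : Tri) (h : det t ≠ 0) : Function.Injective (aff t) := by
  intro x y hxy
  have h1 := congrArg Prod.fst hxy
  have h2 := congrArg Prod.snd hxy
  simp [aff] at h1 h2
  have e1 : (x.1 - y.1) * det t = 0 := by
    unfold det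
    linear_combination (t.2.2.2 - t.1.2) * h1 - (t.2.2.1 - t.1.1) * h2
  have e2 : (x.2 - y.2) * det t = 0 := by
    unfold det
    linear_combination (t.2.1.1 - t.1.1) * h2 - (t.2.1.2 - t.1.2) * h1
  ext
  · have := (mul_eq_zero.1 e1).resolve_right h; linarith
  · have := (mul_eq_zero.1 e2).resolve_right h; linarith

lemma det_ne (t : Tri) (h : det t ≠ 0) : t.1 ≠ t.2.1 ∧ t.2.1 ≠ t.2.2 ∧ t.1 ≠ t.2.2 := by
  refine ⟨?_, ?_, ?_⟩ <;> intro e <;> apply h <;> unfold det <;> rw [e] <;> ring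

/-- Closed reference triangle. -/
def Cl (x : Pt) : Prop := 0 ≤ x.1 ∧ 0 ≤ x.2 ∧ x.1 + x.2 ≤ 1
/-- Open reference triangle. -/
def Op (x : Pt) : Prop := 0 < x.1 ∧ 0 < x.2 ∧ x.1 + x.2 < 1

/-- Descendants of a triangle after `k` subdivisions. -/
def desc : ℕ → Tri → Set Tri
  | 0, t => {t}
  | k + 1, t => ⋃ i, desc k (child t i)

lemma desc_map (t : Tri) (k : ℕ) : ∀ s, desc k (mapT (aff t) s) = mapT (aff t) '' desc k s := by
  induction k with
  | zero => intro s; simp [desc]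
  | succ k ih => intro s; simp only [desc, child_map, ih, Set.image_iUnion]

lemma desc_succ (k : ℕ) : ∀ t, desc (k + 1) t = ⋃ s ∈ desc k t, children s := by
  induction k with
  | zero => intro t; ext s; simp [desc, mem_children, eq_comm]
  | succ k ih =>
    intro t
    have e1 : desc (k + 1 + 1) t = ⋃ i, desc (k + 1) (child t i) := rfl
    have e2 : desc (k + 1) t = ⋃ i, desc k (child t i) := rfl
    rw [e1, e2]
    simp only [ih]
    ext s
    simp only [Set.mem_iUnion]
    constructor
    · rintro ⟨i, u, hu, hs⟩; exact ⟨u, ⟨i, hu⟩, hs⟩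
    · rintro ⟨u, ⟨i, hu⟩, hs⟩; exact ⟨i, u, hu, hs⟩

/-- The sectors of the hexagon, ordered as in `TriSet 1`. -/
def sec (i : Fin 6) : Tri := (hexCorner i, hexCorner (i + 1), ((0:ℝ), (0:ℝ)))

lemma TriSet_one : TriSet 1 = ⋃ i, {sec i} := by
  ext t; simp [TriSet, sec, eq_comm]

lemma TriSet_eq (k : ℕ) : TriSet (k + 1) = ⋃ i, desc k (sec i) := by
  induction k with
  | zero => simp [TriSet_one, desc]
  | succ k ih =>
    rw [TriSet, ih]
    simp only [desc_succ]
    ext s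
    simp only [Set.mem_iUnion]
    constructor
    · rintro ⟨t, ⟨i, hi⟩, hs⟩; exact ⟨i, t, hi, hs⟩
    · rintro ⟨i, t, hi, hs⟩; exact ⟨t, ⟨i, hi⟩, hs⟩

lemma desc_TriSet {m : ℕ} (hm : 1 ≤ m) {t : Tri} (ht : t ∈ TriSet m) (n : ℕ) {s : Tri}
    (hs : s ∈ desc n t) : s ∈ TriSet (m + n) := by
  obtain ⟨m, rfl⟩ : ∃ k, m = k + 1 := ⟨m - 1, by omega⟩
  induction n generalizing s with
  | zero => simp [desc] at hs; simpa [hs] using ht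
  | succ n ih =>
    rw [desc_succ] at hs
    simp only [Set.mem_iUnion] at hs
    obtain ⟨u, hu, hs⟩ := hs
    have := ih hu
    have e : m + 1 + (n + 1) = (m + n) + 2 := by ring
    rw [e, TriSet]
    simp only [Set.mem_iUnion]
    refine ⟨u, ?_, hs⟩
    convert this using 2; ring

lemma desc_det (k : ℕ) : ∀ t, det t ≠ 0 → ∀ s ∈ desc k t, det s ≠ 0 := by
  induction k with
  | zero => intro t ht s hs; simp [desc] at hs; rwa [hs]
  | succ k ih =>
    intro t ht s hs
    simp only [desc, Set.mem_iUnion] at hs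
    obtain ⟨i, hi⟩ := hs
    exact ih _ (det_child t ht i) s hi

lemma desc_Cl (k : ℕ) : ∀ t : Tri, Cl t.1 → Cl t.2.1 → Cl t.2.2 →
    ∀ s ∈ desc k t, Cl s.1 ∧ Cl s.2.1 ∧ Cl s.2.2 := by
  induction k with
  | zero => intro t h1 h2 h3 s hs; simp [desc] at hs; rw [hs]; exact ⟨h1, h2, h3⟩
  | succ k ih =>
    intro t h1 h2 h3 s hs
    simp only [desc, Set.mem_iUnion] at hs
    obtain ⟨i, hi⟩ := hs
    have hm : ∀ a b, Cl a → Cl b → Cl (mpt a b) := by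
      rintro a b ⟨a1, a2, a3⟩ ⟨b1, b2, b3⟩
      refine ⟨?_, ?_, ?_⟩ <;> simp [mpt] <;> linarith
    have hb : ∀ a b c, Cl a → Cl b → Cl c → Cl (bary a b c) := by
      rintro a b c ⟨a1, a2, a3⟩ ⟨b1, b2, b3⟩ ⟨c1, c2, c3⟩
      refine ⟨?_, ?_, ?_⟩ <;> simp [bary] <;> linarith
    have hB := hb _ _ _ h1 h2 h3
    have m12 := hm _ _ h1 h2
    have m23 := hm _ _ h2 h3
    have m13 := hm _ _ h1 h3
    apply ih (child t i) _ _ _ s hi <;> fin_cases i <;> assumption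

/-- The simplices (three edges and the triangle itself) of a triangle. -/
def Sx0 (t : Tri) : Set (Set Pt) := {{t.1, t.2.1}, {t.2.1, t.2.2}, {t.1, t.2.2}, st t}
/-- Edges and triangles of the `k`-fold subdivision of `t`. -/
def Sx (k : ℕ) (t : Tri) : Set (Set Pt) := {v | ∃ s ∈ desc k t, v ∈ Sx0 s}

lemma Sx_succ (k : ℕ) (t : Tri) : Sx (k + 1) t = ⋃ i, Sx k (child t i) := by
  ext v; simp only [Sx, desc, Set.mem_iUnion, Set.mem_ofPred_eq]
  constructor
  · rintro ⟨s, ⟨i, hi⟩, h⟩; exact ⟨i, s, hi, h⟩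
  · rintro ⟨i, s, hi, h⟩; exact ⟨s, ⟨i, hi⟩, h⟩

lemma Sx_simp (n : ℕ) : Simp2 n ∪ Simp1 n = {v | ∃ t ∈ TriSet n, v ∈ Sx0 t} := by
  ext v
  simp only [Simp2, Simp1, Sx0, st, Set.mem_union, Set.mem_ofPred_eq, Set.mem_insert_iff,
    Set.mem_singleton_iff]
  constructor
  · rintro (⟨t, ht, h⟩ | ⟨t, ht, h⟩) <;> exact ⟨t, ht, by tauto⟩
  · rintro ⟨t, ht, h⟩
    rcases h with h | h | h | h
    · right; exact ⟨t, ht, by tauto⟩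
    · right; exact ⟨t, ht, by tauto⟩
    · right; exact ⟨t, ht, by tauto⟩
    · left; exact ⟨t, ht, by tauto⟩

lemma Sx0_map (F : Pt → Pt) (s : Tri) (v : Set Pt) :
    v ∈ Sx0 (mapT F s) ↔ ∃ w ∈ Sx0 s, v = F '' w := by
  simp [Sx0, st, mapT, Set.image_insert_eq]

lemma Sx_ref (k : ℕ) (t : Tri) (v : Set Pt) :
    v ∈ Sx k t ↔ ∃ w ∈ Sx k ref, v = aff t '' w := by
  have : desc k t = mapT (aff t) '' desc k ref := by rw [← desc_map, mapT_ref]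
  simp only [Sx, this, Set.mem_ofPred_eq, Set.exists_mem_image, Sx0_map]
  constructor
  · rintro ⟨s, hs, w, hw, h⟩; exact ⟨w, ⟨s, hs, hw⟩, h⟩
  · rintro ⟨w, ⟨s, hs, hw⟩, h⟩; exact ⟨s, hs, w, hw, h⟩

lemma det_ref : det ref ≠ 0 := by simp [det, ref]

lemma Sx_Cl {k : ℕ} {w : Set Pt} (hw : w ∈ Sx k ref) : ∀ x ∈ w, Cl x := by
  obtain ⟨s, hs, hw⟩ := hw
  obtain ⟨h1, h2, h3⟩ := desc_Cl k ref (by simp [Cl, ref]) (by simp [Cl, ref])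
    (by simp [Cl, ref]) s hs
  intro x hx
  simp only [Sx0, st, Set.mem_insert_iff, Set.mem_singleton_iff] at hw
  rcases hw with rfl | rfl | rfl | rfl <;>
    simp only [Set.mem_insert_iff, Set.mem_singleton_iff] at hx
  · rcases hx with rfl | rfl <;> assumption
  · rcases hx with rfl | rfl <;> assumption
  · rcases hx with rfl | rfl <;> assumption
  · rcases hx with rfl | rfl | rfl <;> assumption

lemma Sx0_nontrivial {s : Tri} (hs : det s ≠ 0) {w : Set Pt} (hw : w ∈ Sx0 s) :
    w.Nontrivial := by
  obtain ⟨h1, h2, h3⟩ := det_ne s hs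
  simp only [Sx0, st, Set.mem_insert_iff, Set.mem_singleton_iff] at hw
  rcases hw with rfl | rfl | rfl | rfl
  · exact Set.nontrivial_pair h1
  · exact Set.nontrivial_pair h2
  · exact Set.nontrivial_pair h3
  · exact (Set.nontrivial_pair h1).mono (by intro x; simp; tauto)

lemma Sx_nontrivial {k : ℕ} {w : Set Pt} (hw : w ∈ Sx k ref) : w.Nontrivial := by
  obtain ⟨s, hs, hw⟩ := hw
  exact Sx0_nontrivial (desc_det k ref det_ref s hs) hw

/-! ### Energy forms on subdivided triangles -/

/-- Energy form of a single triangle. -/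
def loc (t : Tri) (f g : Pot) : ℝ :=
  (1 / 2) * ((f {t.1, t.2.1} - f (st t)) * (g {t.1, t.2.1} - g (st t))
    + (f {t.2.1, t.2.2} - f (st t)) * (g {t.2.1, t.2.2} - g (st t))
    + (f {t.1, t.2.2} - f (st t)) * (g {t.1, t.2.2} - g (st t)))

/-- Energy form of the `k`-fold subdivision of `t`. -/
def bil : ℕ → Tri → Pot → Pot → ℝ
  | 0, t, f, g => loc t f g
  | k + 1, t, f, g => ∑ i, bil k (child t i) f g

/-- Energy form of the hexagon `T_{k+1}`. -/
def hexForm (k : ℕ) (f g : Pot) : ℝ := ∑ i, bil k (sec i) f g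

lemma bil_map (t : Tri) (f g : Pot) (k : ℕ) : ∀ s, bil k (mapT (aff t) s) f g
    = bil k s (fun w => f (aff t '' w)) (fun w => g (aff t '' w)) := by
  induction k with
  | zero => intro s; simp [bil, loc, st, mapT, Set.image_insert_eq]
  | succ k ih => intro s; simp only [bil, child_map, ih]

lemma bil_ref (t : Tri) (f g : Pot) (k : ℕ) : bil k t f g
    = bil k ref (fun w => f (aff t '' w)) (fun w => g (aff t '' w)) := by
  conv_lhs => rw [← mapT_ref t]
  rw [bil_map]

lemma bil_congr (k : ℕ) (f f' g g' : Pot) : ∀ t, (∀ v ∈ Sx k t, f v = f' v) →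
    (∀ v ∈ Sx k t, g v = g' v) → bil k t f g = bil k t f' g' := by
  induction k with
  | zero =>
    intro t hf hg
    have hs : ∀ v ∈ Sx0 t, v ∈ Sx 0 t := fun v hv => ⟨t, by simp [desc], hv⟩
    have h1 := hs {t.1, t.2.1} (by simp [Sx0])
    have h2 := hs {t.2.1, t.2.2} (by simp [Sx0])
    have h3 := hs {t.1, t.2.2} (by simp [Sx0])
    have h4 := hs (st t) (by simp [Sx0])
    simp only [bil, loc, hf _ h1, hf _ h2, hf _ h3, hf _ h4, hg _ h1, hg _ h2, hg _ h3, hg _ h4]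
  | succ k ih =>
    intro t hf hg
    simp only [bil]
    refine Finset.sum_congr rfl fun i _ => ih _ ?_ ?_
    · intro v hv; exact hf v (by rw [Sx_succ]; exact Set.mem_iUnion.2 ⟨i, hv⟩)
    · intro v hv; exact hg v (by rw [Sx_succ]; exact Set.mem_iUnion.2 ⟨i, hv⟩)

/-- Swap of the first two vertices. The subdivision of `t` is unchanged up to the order of the
children. -/
def swp (t : Tri) : Tri := (t.2.1, t.1, t.2.2)

lemma child_swp (t : Tri) (i : Fin 6) :
    child (swp t) i = child t (![1, 0, 4, 5, 2, 3] i) := by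
  have hb : bary t.2.1 t.1 t.2.2 = bary t.1 t.2.1 t.2.2 := by simp [bary, add_comm t.2.1]
  fin_cases i <;> simp [child, swp, hb, mpt_comm t.2.1 t.1]

lemma st_swp (t : Tri) : st (swp t) = st t := by simp [st, swp, Set.insert_comm]

lemma bil_swp (k : ℕ) (t : Tri) (f g : Pot) : bil k (swp t) f g = bil k t f g := by
  cases k with
  | zero => simp only [bil, loc, st_swp]; simp only [swp, Set.pair_comm t.2.1 t.1]; ring
  | succ k =>
    simp only [bil, child_swp, Fin.sum_univ_succ]
    simp
    ring

lemma Sx_swp (k : ℕ) (t : Tri) : Sx k (swp t) = Sx k t := by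
  cases k with
  | zero =>
    ext v; simp only [Sx, desc, Set.mem_singleton_iff, exists_eq_left, Set.mem_ofPred_eq, Sx0,
      st_swp]
    simp only [swp, Set.pair_comm t.2.1 t.1, Set.mem_insert_iff, Set.mem_singleton_iff]; tauto
  | succ k =>
    ext v
    simp only [Sx_succ, child_swp, Set.mem_iUnion, Fin.exists_fin_succ]
    simp
    tauto

/-! ### Charts of the hexagon -/

/-- Oblique coordinates: `L (x, y) = x • c₀ + y • c₁`, where `c₀, c₁` are the first two corners. -/
def L (p : Pt) : Pt := (p.1 + p.2 / 2, p.2 * (Real.sqrt 3 / 2))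

lemma L_inj : Function.Injective L := by
  intro p q h
  have h1 := congrArg Prod.fst h
  have h2 := congrArg Prod.snd h
  simp [L] at h1 h2
  ext
  · rw [h2] at h1; linarith
  · exact h2

lemma corner0 : hexCorner 0 = L (1, 0) := by simp [hexCorner, L]
lemma corner1 : hexCorner 1 = L (0, 1) := by simp [hexCorner, L]
lemma corner2 : hexCorner 2 = L (-1, 1) := by
  have e : ((2 : ℕ) : ℝ) * (Real.pi / 3) = Real.pi - Real.pi / 3 := by push_cast; ring
  rw [hexCorner, e, Real.cos_pi_sub, Real.sin_pi_sub]
  ext <;> simp [L]; ring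
lemma corner3 : hexCorner 3 = L (-1, 0) := by
  have e : ((3 : ℕ) : ℝ) * (Real.pi / 3) = Real.pi := by push_cast; ring
  rw [hexCorner, e]
  ext <;> simp [L]
lemma corner4 : hexCorner 4 = L (0, -1) := by
  have e : ((4 : ℕ) : ℝ) * (Real.pi / 3) = Real.pi / 3 + Real.pi := by push_cast; ring
  rw [hexCorner, e, Real.cos_add_pi, Real.sin_add_pi]
  ext <;> simp [L]; ring
lemma corner5 : hexCorner 5 = L (1, -1) := by
  have e : ((5 : ℕ) : ℝ) * (Real.pi / 3) = 2 * Real.pi - Real.pi / 3 := by push_cast; ring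
  rw [hexCorner, e, Real.cos_two_pi_sub, Real.sin_two_pi_sub]
  ext <;> simp [L]; ring
lemma corner6 : hexCorner 6 = L (1, 0) := by
  have e : ((6 : ℕ) : ℝ) * (Real.pi / 3) = 2 * Real.pi := by push_cast; ring
  rw [hexCorner, e]
  ext <;> simp [L]

/-- The sectors, reordered as (even corner, odd corner, center). With this orientation the charts
of two adjacent sectors agree on the spoke they share. -/
def hs : Fin 6 → Tri := ![sec 0, swp (sec 1), sec 2, swp (sec 3), sec 4, swp (sec 5)]

/-- Oblique coordinates of the point of the `i`-th sector with chart coordinates `y`. -/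
def sc : Fin 6 → Pt → Pt := ![fun y => (1 - y.1 - y.2, y.1), fun y => (-(1 - y.1 - y.2), 1 - y.2),
  fun y => (-(1 - y.2), 1 - y.1 - y.2), fun y => (-y.1, -(1 - y.1 - y.2)),
  fun y => (y.1, -(1 - y.2)), fun y => (1 - y.2, -y.1)]

lemma aff_hs (i : Fin 6) (y : Pt) : aff (hs i) y = L (sc i y) := by
  fin_cases i <;> ext <;>
    simp [hs, sec, swp, aff, sc, corner0, corner1, corner2, corner3, corner4, corner5, corner6,
      L] <;> ring

lemma bil_hs (k : ℕ) (i : Fin 6) (f g : Pot) : bil k (hs i) f g = bil k (sec i) f g := by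
  fin_cases i <;> simp [hs, bil_swp]

lemma Sx_hs (k : ℕ) (i : Fin 6) : Sx k (hs i) = Sx k (sec i) := by
  fin_cases i <;> simp [hs, Sx_swp]

lemma aff_sec (i : Fin 6) (y : Pt) (hy : Op y) : ∃ y', Op y' ∧ aff (sec i) y = aff (hs i) y' := by
  have key : ∀ t : Tri, aff t y = aff (swp t) (1 - y.1 - y.2, y.2) := by
    intro t; ext <;> simp [aff, swp] <;> ring
  obtain ⟨h1, h2, h3⟩ := hy
  have hy' : Op (1 - y.1 - y.2, y.2) := by refine ⟨?_, ?_, ?_⟩ <;> simp <;> linarith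
  fin_cases i
  · exact ⟨y, ⟨h1, h2, h3⟩, rfl⟩
  · exact ⟨_, hy', key _⟩
  · exact ⟨y, ⟨h1, h2, h3⟩, rfl⟩
  · exact ⟨_, hy', key _⟩
  · exact ⟨y, ⟨h1, h2, h3⟩, rfl⟩
  · exact ⟨_, hy', key _⟩

lemma det_sec (i : Fin 6) : det (sec i) ≠ 0 := by
  have h3 : Real.sqrt 3 ≠ 0 := by positivity
  have : det (sec i) = Real.sqrt 3 / 2 := by
    fin_cases i <;>
      simp [det, sec, corner0, corner1, corner2, corner3, corner4, corner5, corner6, L] <;> ring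
  rw [this]; positivity

lemma TriSet_det {n : ℕ} (hn : 1 ≤ n) {t : Tri} (ht : t ∈ TriSet n) : det t ≠ 0 := by
  obtain ⟨k, rfl⟩ : ∃ k, n = k + 1 := ⟨n - 1, by omega⟩
  rw [TriSet_eq] at ht
  obtain ⟨i, hi⟩ := Set.mem_iUnion.1 ht
  exact desc_det k _ (det_sec i) t hi

/-- The grouping of the sectors into the families `{0, 1}` (next to the terminal `A`), `{2, 5}`
and `{3, 4}` (next to the terminal `B`). -/
def grp : Fin 6 → Fin 3 := ![0, 0, 1, 2, 2, 1]

/-- A common point of two sectors has the same chart coordinates in both. If the sectors lie in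
different families, it lies on the spokes `x.1 = 0` bounding the first family and on the spokes
`x.1 + x.2 = 1` bounding the third, whenever these families occur. -/
lemma sector_inter (i j : Fin 6) (y y' : Pt) (hy : Cl y) (hy' : Cl y')
    (h : aff (hs i) y = aff (hs j) y') :
    y = y' ∧ (grp i ≠ grp j → (grp i ≠ 2 ∨ grp j ≠ 2) ∧
      ((grp i = 0 ∨ grp j = 0) → y.1 = 0) ∧ ((grp i = 2 ∨ grp j = 2) → y.1 + y.2 = 1)) := by
  rw [aff_hs, aff_hs] at h
  have h := L_inj h
  have h1 := congrArg Prod.fst h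
  have h2 := congrArg Prod.snd h
  obtain ⟨a1, a2, a3⟩ := hy
  obtain ⟨b1, b2, b3⟩ := hy'
  fin_cases i <;> fin_cases j <;> simp [sc] at h1 h2 <;>
    refine ⟨Prod.ext_iff.2 ⟨by linarith, by linarith⟩, ?_⟩ <;>
    simp [grp] <;> (try constructor) <;> linarith

lemma sector_disj (i j : Fin 6) (y y' : Pt) (hy : Op y) (hy' : Op y')
    (h : aff (hs i) y = aff (hs j) y') : i = j := by
  rw [aff_hs, aff_hs] at h
  have h := L_inj h
  have h1 := congrArg Prod.fst h
  have h2 := congrArg Prod.snd h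
  obtain ⟨a1, a2, a3⟩ := hy
  obtain ⟨b1, b2, b3⟩ := hy'
  fin_cases i <;> fin_cases j <;> simp [sc] at h1 h2 <;> first | rfl | (exfalso; linarith)

lemma child_disj (t : Tri) (ht : det t ≠ 0) (i j : Fin 6) (y y' : Pt) (hy : Op y) (hy' : Op y')
    (h : aff (child t i) y = aff (child t j) y') : i = j := by
  rw [aff_child, aff_child t j] at h
  have h := aff_inj t ht h
  have h1 := congrArg Prod.fst h
  have h2 := congrArg Prod.snd h
  obtain ⟨a1, a2, a3⟩ := hy
  obtain ⟨b1, b2, b3⟩ := hy'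
  fin_cases i <;> fin_cases j <;> simp [aff, child, ref, mpt, bary] at h1 h2 <;>
    first | rfl | (exfalso; linarith)

lemma child_Op (i : Fin 6) (y : Pt) (hy : Op y) : Op (aff (child ref i) y) := by
  obtain ⟨a1, a2, a3⟩ := hy
  fin_cases i <;> refine ⟨?_, ?_, ?_⟩ <;> simp [aff, child, ref, mpt, bary] <;> linarith

lemma desc_bary (k : ℕ) : ∀ t, ∀ s ∈ desc k t, ∃ y, Op y ∧ bary s.1 s.2.1 s.2.2 = aff t y := by
  induction k with
  | zero =>
    intro t s hs
    simp [desc] at hs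
    refine ⟨(1 / 3, 1 / 3), by norm_num [Op], ?_⟩
    rw [hs]
    ext <;> simp [bary, aff] <;> ring
  | succ k ih =>
    intro t s hs
    simp only [desc, Set.mem_iUnion] at hs
    obtain ⟨i, hi⟩ := hs
    obtain ⟨y, hy, h⟩ := ih _ s hi
    exact ⟨_, child_Op i y hy, by rw [h, aff_child]⟩

/-! ### The graph energy as a sum over triangles -/

/-- Centroid of a three-point set. -/
def cen (v : Set Pt) : Pt := (3 : ℝ)⁻¹ • ∑ᶠ x ∈ v, x

lemma cen_st (t : Tri) (h : det t ≠ 0) : cen (st t) = bary t.1 t.2.1 t.2.2 := by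
  obtain ⟨h1, h2, h3⟩ := det_ne t h
  rw [cen, st, finsum_mem_insert _ (by simp [h1, h3]) (Set.toFinite _), finsum_mem_pair h2, bary,
    add_assoc]

open Classical in
/-- The triangles of the `k`-fold subdivision, as a finite family of vertex sets. -/
def S2f : ℕ → Tri → Finset (Set Pt)
  | 0, t => {st t}
  | k + 1, t => Finset.univ.biUnion fun i => S2f k (child t i)

lemma mem_S2f (k : ℕ) : ∀ t v, v ∈ S2f k t ↔ ∃ s ∈ desc k t, v = st s := by
  induction k with
  | zero => intro t v; simp [S2f, desc]
  | succ k ih =>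
    intro t v
    simp only [S2f, desc, Finset.mem_biUnion, Finset.mem_univ, true_and, ih, Set.mem_iUnion]
    constructor
    · rintro ⟨i, s, hs, h⟩; exact ⟨s, ⟨i, hs⟩, h⟩
    · rintro ⟨s, ⟨i, hs⟩, h⟩; exact ⟨i, s, hs, h⟩

lemma S2f_cen {k : ℕ} {t : Tri} (ht : det t ≠ 0) {v : Set Pt} (hv : v ∈ S2f k t) :
    ∃ y, Op y ∧ cen v = aff t y := by
  obtain ⟨s, hs, rfl⟩ := (mem_S2f k t v).1 hv
  rw [cen_st s (desc_det k t ht s hs)]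
  exact desc_bary k t s hs

/-- Distinct triangles of a subdivision have distinct vertex sets, because their centroids lie
in disjoint open sets. Hence a sum over vertex sets is a sum over the tree of descendants. -/
lemma sum_S2f (f : Pot) (ψ : Set Pt → ℝ) (k : ℕ) : ∀ t, det t ≠ 0 →
    (∀ s ∈ desc k t, ψ (st s) = loc s f f) → ∑ q ∈ S2f k t, ψ q = bil k t f f := by
  classical
  induction k with
  | zero => intro t ht h; simp [S2f, bil]; exact h t (by simp [desc])
  | succ k ih =>
    intro t ht h
    rw [S2f, Finset.sum_biUnion]
    · rw [bil]
      refine Finset.sum_congr rfl fun i _ => ih _ (det_child t ht i) fun s hs => h s ?_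
      simp only [desc, Set.mem_iUnion]; exact ⟨i, hs⟩
    · intro i _ j _ hij
      rw [Function.onFun, Finset.disjoint_left]
      intro v hv hv'
      obtain ⟨y, hy, e⟩ := S2f_cen (det_child t ht i) hv
      obtain ⟨y', hy', e'⟩ := S2f_cen (det_child t ht j) hv'
      exact hij (child_disj t ht i j y y' hy hy' (e.symm.trans e'))

open Classical in
/-- The triangles of `T_{k+1}`. -/
def S2h (k : ℕ) : Finset (Set Pt) := Finset.univ.biUnion fun i => S2f k (sec i)

lemma mem_S2h (k : ℕ) (v : Set Pt) : v ∈ S2h k ↔ v ∈ Simp2 (k + 1) := by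
  simp only [S2h, Finset.mem_biUnion, Finset.mem_univ, true_and, mem_S2f, Simp2, TriSet_eq,
    Set.mem_ofPred_eq, Set.mem_iUnion]
  constructor
  · rintro ⟨i, s, hs, h⟩; exact ⟨s, ⟨i, hs⟩, h⟩
  · rintro ⟨s, ⟨i, hs⟩, h⟩; exact ⟨i, s, hs, h⟩

lemma sum_S2h (f : Pot) (ψ : Set Pt → ℝ) (k : ℕ)
    (h : ∀ s ∈ TriSet (k + 1), ψ (st s) = loc s f f) : ∑ q ∈ S2h k, ψ q = hexForm k f f := by
  classical
  rw [S2h, Finset.sum_biUnion]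
  · refine Finset.sum_congr rfl fun i _ => sum_S2f f ψ k _ (det_sec i) fun s hs => h s ?_
    rw [TriSet_eq]; exact Set.mem_iUnion.2 ⟨i, hs⟩
  · intro i _ j _ hij
    rw [Function.onFun, Finset.disjoint_left]
    intro v hv hv'
    obtain ⟨y, hy, e⟩ := S2f_cen (det_sec i) hv
    obtain ⟨y', hy', e'⟩ := S2f_cen (det_sec j) hv'
    obtain ⟨z, hz, ez⟩ := aff_sec i y hy
    obtain ⟨z', hz', ez'⟩ := aff_sec j y' hy'
    exact hij (sector_disj i j z z' hz hz' (by rw [← ez, ← ez', ← e, ← e']))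

lemma Simp1_sub {n : ℕ} (hn : 1 ≤ n) {e : Set Pt} (he : e ∈ Simp1 n) :
    ∃ x y, x ≠ y ∧ e = {x, y} := by
  obtain ⟨t, ht, h⟩ := he
  obtain ⟨h1, h2, h3⟩ := det_ne t (TriSet_det hn ht)
  rcases h with h | h | h
  · exact ⟨_, _, h1, h⟩
  · exact ⟨_, _, h2, h⟩
  · exact ⟨_, _, h3, h⟩

lemma Simp12 {n : ℕ} (hn : 1 ≤ n) {e : Set Pt} (he : e ∈ Simp1 n) (he' : e ∈ Simp2 n) :
    False := by
  obtain ⟨x, y, hxy, rfl⟩ := Simp1_sub hn he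
  obtain ⟨t, ht, h⟩ := he'
  obtain ⟨h1, h2, h3⟩ := det_ne t (TriSet_det hn ht)
  have e1 : t.1 ∈ ({x, y} : Set Pt) := by rw [h]; simp
  have e2 : t.2.1 ∈ ({x, y} : Set Pt) := by rw [h]; simp
  have e3 : t.2.2 ∈ ({x, y} : Set Pt) := by rw [h]; simp
  simp only [Set.mem_insert_iff, Set.mem_singleton_iff] at e1 e2 e3
  grind

lemma Simp1_finite (k : ℕ) : (Simp1 (k + 1)).Finite := by
  have : (⋃ s ∈ S2h k, 𝒫 s).Finite := by
    refine Set.Finite.biUnion (Finset.finite_toSet _) fun s hs => ?_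
    rw [Finset.mem_coe, mem_S2h] at hs
    obtain ⟨t, ht, rfl⟩ := hs
    exact (Set.toFinite _).finite_subsets
  refine this.subset ?_
  rintro e ⟨t, ht, h⟩
  refine Set.mem_iUnion₂.2 ⟨st t, (mem_S2h k _).2 ⟨t, ht, rfl⟩, ?_⟩
  rcases h with rfl | rfl | rfl <;> intro x <;> simp [st] <;> tauto

lemma pair_of_mem_st {s : Tri} {x y : Pt} (hxy : x ≠ y) (hx : x ∈ st s) (hy : y ∈ st s) :
    ({x, y} : Set Pt) = {s.1, s.2.1} ∨ ({x, y} : Set Pt) = {s.2.1, s.2.2} ∨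
      ({x, y} : Set Pt) = {s.1, s.2.2} := by
  rcases hx with rfl | rfl | rfl <;> rcases hy with rfl | rfl | rfl
  · exact absurd rfl hxy
  · exact Or.inl rfl
  · exact Or.inr (Or.inr rfl)
  · exact Or.inl (Set.pair_comm _ _)
  · exact absurd rfl hxy
  · exact Or.inr (Or.inl rfl)
  · exact Or.inr (Or.inr (Set.pair_comm _ _))
  · exact Or.inr (Or.inl (Set.pair_comm _ _))
  · exact absurd rfl hxy

/-- The energy on the hexacarpet graph is the sum of the local energies of the triangles. The
`tsum`s in `energy` have finite support. -/
lemma energy_eq (k : ℕ) (f : Pot) : energy (cH (k + 1)) f = hexForm k f f := by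
  classical
  have hn : 1 ≤ k + 1 := by omega
  -- the conductance with edges oriented from edge vertices to triangle vertices
  set a : Set Pt → Set Pt → ℝ := fun p q =>
    if p ∈ Simp1 (k + 1) ∧ q ∈ Simp2 (k + 1) ∧ p ⊆ q then 1 / 2 else 0 with ha
  have hc : ∀ p q, cH (k + 1) p q = a p q + a q p := by
    intro p q
    simp only [cH, ha]
    by_cases h1 : p ∈ Simp1 (k + 1) ∧ q ∈ Simp2 (k + 1) ∧ p ⊆ q
    · have h2 : ¬ (q ∈ Simp1 (k + 1) ∧ p ∈ Simp2 (k + 1) ∧ q ⊆ p) :=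
        fun h => Simp12 hn h1.1 h.2.1
      rw [if_pos (Or.inl h1), if_pos h1, if_neg h2]; ring
    · by_cases h2 : q ∈ Simp1 (k + 1) ∧ p ∈ Simp2 (k + 1) ∧ q ⊆ p
      · rw [if_pos (Or.inr h2), if_neg h1, if_pos h2]; ring
      · rw [if_neg (by tauto), if_neg h1, if_neg h2]; ring
  set U : Finset (Set Pt) := (Simp1_finite k).toFinset ∪ S2h k with hU
  have hU1 : ∀ p ∈ Simp1 (k + 1), p ∈ U := fun p hp => by simp [hU, hp]
  have hU2 : ∀ p ∈ Simp2 (k + 1), p ∈ U := fun p hp => by simp [hU, mem_S2h, hp]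
  have ha1 : ∀ p q, p ∉ U → a p q = 0 := by
    intro p q hp; exact if_neg fun h => hp (hU1 p h.1)
  have ha2 : ∀ p q, q ∉ U → a p q = 0 := by
    intro p q hp; exact if_neg fun h => hp (hU2 q h.2.1)
  have s1 : energy (cH (k + 1)) f = (1 / 2) * ∑ p ∈ U, ∑ q ∈ U,
      (a p q + a q p) * (f p - f q) ^ 2 := by
    rw [energy, tsum_eq_sum (s := U)]
    · congr 1
      refine Finset.sum_congr rfl fun p _ => ?_
      rw [tsum_eq_sum (s := U)]
      · simp only [hc]
      · intro q hq; rw [hc, ha1 _ _ hq, ha2 _ _ hq]; ring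
    · intro p hp
      have : ∀ q, cH (k + 1) p q * (f p - f q) ^ 2 = 0 := by
        intro q; rw [hc, ha1 _ _ hp, ha2 _ _ hp]; ring
      simp [this]
  have s2 : ∑ p ∈ U, ∑ q ∈ U, (a p q + a q p) * (f p - f q) ^ 2 =
      2 * ∑ q ∈ U, ∑ p ∈ U, a p q * (f p - f q) ^ 2 := by
    simp only [add_mul, Finset.sum_add_distrib]
    rw [Finset.sum_comm, two_mul]
    congr 1
    refine Finset.sum_congr rfl fun q _ => Finset.sum_congr rfl fun p _ => ?_
    ring
  have s3 : ∑ q ∈ U, ∑ p ∈ U, a p q * (f p - f q) ^ 2 =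
      ∑ q ∈ S2h k, ∑ p ∈ U, a p q * (f p - f q) ^ 2 := by
    symm
    apply Finset.sum_subset
    · intro q hq; simp [hU, hq]
    · intro q _ hq
      refine Finset.sum_eq_zero fun p _ => ?_
      rw [mem_S2h] at hq
      have : a p q = 0 := if_neg fun h => hq h.2.1
      rw [this]; ring
  rw [s1, s2, s3, ← mul_assoc, show (1 / 2 * 2 : ℝ) = 1 by norm_num, one_mul]
  apply sum_S2h
  intro s hs
  obtain ⟨h1, h2, h3⟩ := det_ne s (TriSet_det hn hs)
  have m1 : ({s.1, s.2.1} : Set Pt) ∈ Simp1 (k + 1) := ⟨s, hs, by tauto⟩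
  have m2 : ({s.2.1, s.2.2} : Set Pt) ∈ Simp1 (k + 1) := ⟨s, hs, by tauto⟩
  have m3 : ({s.1, s.2.2} : Set Pt) ∈ Simp1 (k + 1) := ⟨s, hs, by tauto⟩
  have m4 : st s ∈ Simp2 (k + 1) := ⟨s, hs, rfl⟩
  have d1 : ({s.1, s.2.1} : Set Pt) ≠ {s.2.1, s.2.2} := by
    intro h; have : s.1 ∈ ({s.2.1, s.2.2} : Set Pt) := by rw [← h]; simp
    simp [h1, h3] at this
  have d2 : ({s.1, s.2.1} : Set Pt) ≠ {s.1, s.2.2} := by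
    intro h; have : s.2.1 ∈ ({s.1, s.2.2} : Set Pt) := by rw [← h]; simp
    simp [h1.symm, h2] at this
  have d3 : ({s.2.1, s.2.2} : Set Pt) ≠ {s.1, s.2.2} := by
    intro h; have : s.2.1 ∈ ({s.1, s.2.2} : Set Pt) := by rw [← h]; simp
    simp [h1.symm, h2] at this
  have sub : ({{s.1, s.2.1}, {s.2.1, s.2.2}, {s.1, s.2.2}} : Finset (Set Pt)) ⊆ U := by
    intro e; simp only [Finset.mem_insert, Finset.mem_singleton]
    rintro (rfl | rfl | rfl) <;> apply hU1 <;> assumption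
  rw [← Finset.sum_subset sub]
  · have v1 : a {s.1, s.2.1} (st s) = 1 / 2 := if_pos ⟨m1, m4, by intro x; simp [st]; tauto⟩
    have v2 : a {s.2.1, s.2.2} (st s) = 1 / 2 := if_pos ⟨m2, m4, by intro x; simp [st]; tauto⟩
    have v3 : a {s.1, s.2.2} (st s) = 1 / 2 := if_pos ⟨m3, m4, by intro x; simp [st]; tauto⟩
    rw [Finset.sum_insert (by simp [d1, d2]), Finset.sum_pair d3, v1, v2, v3, loc]
    ring
  · intro p _ hp
    have : a p (st s) = 0 := by
      refine if_neg fun ⟨q1, q2, q3⟩ => hp ?_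
      obtain ⟨x, y, hxy, rfl⟩ := Simp1_sub hn q1
      have hx : x ∈ st s := q3 (by simp)
      have hy : y ∈ st s := q3 (by simp)
      simp only [Finset.mem_insert, Finset.mem_singleton]
      exact pair_of_mem_st hxy hx hy
    rw [this]; ring

/-! ### Sums of squares and orthogonal projection -/

/-- A form on potentials which is a finite sum of products of linear functionals. -/
def IsSOS (Q : Pot → Pot → ℝ) : Prop :=
  ∃ (ι : Type) (_ : Fintype ι) (L : ι → Pot →ₗ[ℝ] ℝ), ∀ f g, Q f g = ∑ i, L i f * L i g

namespace IsSOS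
variable {Q : Pot → Pot → ℝ}

lemma comm (h : IsSOS Q) (f g : Pot) : Q f g = Q g f := by
  obtain ⟨ι, _, L, hL⟩ := h; simp only [hL, mul_comm]

lemma add_right (h : IsSOS Q) (f g g' : Pot) : Q f (g + g') = Q f g + Q f g' := by
  obtain ⟨ι, _, L, hL⟩ := h; simp only [hL, map_add, mul_add, Finset.sum_add_distrib]

lemma add_left (h : IsSOS Q) (f f' g : Pot) : Q (f + f') g = Q f g + Q f' g := by
  rw [h.comm, h.add_right, h.comm g, h.comm g]

lemma smul_right (h : IsSOS Q) (c : ℝ) (f g : Pot) : Q f (c • g) = c * Q f g := by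
  obtain ⟨ι, _, L, hL⟩ := h
  simp only [hL, map_smul, smul_eq_mul, Finset.mul_sum]
  exact Finset.sum_congr rfl fun i _ => by ring

lemma sub_right (h : IsSOS Q) (f g g' : Pot) : Q f (g - g') = Q f g - Q f g' := by
  have := h.add_right f (g - g') g'; rw [sub_add_cancel] at this; linarith

lemma nonneg (h : IsSOS Q) (f : Pot) : 0 ≤ Q f f := by
  obtain ⟨ι, _, L, hL⟩ := h; rw [hL]; exact Finset.sum_nonneg fun i _ => mul_self_nonneg _

lemma cs (h : IsSOS Q) (f g : Pot) : Q f g ^ 2 ≤ Q f f * Q g g := by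
  obtain ⟨ι, _, L, hL⟩ := h; simp only [hL, ← pow_two]
  exact Finset.sum_mul_sq_le_sq_mul_sq _ _ _

lemma add_self_le (h : IsSOS Q) (f g : Pot) : Q (f + g) (f + g) ≤ 2 * (Q f f + Q g g) := by
  have h1 := h.nonneg (f - g)
  have e1 : Q (f - g) (f - g) = Q f f - 2 * Q f g + Q g g := by
    rw [h.sub_right, h.comm _ f, h.comm _ g, h.sub_right, h.sub_right, h.comm g f]; ring
  rw [h.add_right, h.add_left, h.add_left, h.comm g f]
  linarith

/-- Orthogonal projection: a potential in the coset `u + Z` that is `Q`-orthogonal to `Z`. -/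
lemma exists_min (h : IsSOS Q) (Z : Submodule ℝ Pot) (u : Pot) :
    ∃ v, v - u ∈ Z ∧ ∀ z ∈ Z, Q v z = 0 := by
  obtain ⟨ι, _, L, hL⟩ := h
  let d : Pot →ₗ[ℝ] EuclideanSpace ℝ ι :=
    (WithLp.linearEquiv 2 ℝ (ι → ℝ)).symm.toLinearMap ∘ₗ LinearMap.pi L
  have hd : ∀ f g, Q f g = inner ℝ (d f) (d g) := by
    intro f g
    rw [hL, PiLp.inner_apply]
    exact Finset.sum_congr rfl fun i _ => by simp [d, mul_comm]
  obtain ⟨z0, hz0, e0⟩ := (Z.map d).starProjection_apply_mem (d u)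
  refine ⟨u - z0, by simpa using hz0, fun z hz => ?_⟩
  rw [hd, map_sub, e0]
  have := (Z.map d).sub_starProjection_mem_orthogonal (d u)
  rw [Submodule.mem_orthogonal'] at this
  exact this _ ⟨z, hz, rfl⟩

lemma sum {ι : Type} [Fintype ι] {Q : ι → Pot → Pot → ℝ} (h : ∀ i, IsSOS (Q i)) :
    IsSOS fun f g => ∑ i, Q i f g := by
  choose κ hκ L hL using h
  refine ⟨Σ i, κ i, inferInstance, fun p => L p.1 p.2, fun f g => ?_⟩
  simp only [hL, Fintype.sum_sigma]

end IsSOS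

lemma loc_sos (t : Tri) : IsSOS (loc t) := by
  let P : Set Pt → Pot →ₗ[ℝ] ℝ := fun e =>
    Real.sqrt (1 / 2) • (LinearMap.proj (R := ℝ) (φ := fun _ : Set Pt => ℝ) e
      - LinearMap.proj (R := ℝ) (φ := fun _ : Set Pt => ℝ) (st t))
  refine ⟨Fin 3, inferInstance,
    ![P {t.1, t.2.1}, P {t.2.1, t.2.2}, P {t.1, t.2.2}], fun f g => ?_⟩
  have hs : Real.sqrt (1 / 2) * Real.sqrt (1 / 2) = 1 / 2 := Real.mul_self_sqrt (by norm_num)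
  have hP : ∀ e, P e f * P e g = (1 / 2) * ((f e - f (st t)) * (g e - g (st t))) := by
    intro e
    simp only [P, LinearMap.smul_apply, LinearMap.sub_apply, LinearMap.proj_apply, smul_eq_mul]
    linear_combination ((f e - f (st t)) * (g e - g (st t))) * hs
  simp only [Fin.sum_univ_three, Matrix.cons_val_zero, Matrix.cons_val_one, Matrix.cons_val, hP,
    loc]
  ring

lemma bil_sos (k : ℕ) : ∀ t, IsSOS (bil k t) := by
  induction k with
  | zero => intro t; exact loc_sos t
  | succ k ih => intro t; exact IsSOS.sum fun i => ih (child t i)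

lemma hexForm_sos (k : ℕ) : IsSOS (hexForm k) := IsSOS.sum fun i => bil_sos k (sec i)

lemma bil_const (k : ℕ) (c : ℝ) (f : Pot) : ∀ t, bil k t f (fun _ => c) = 0 := by
  induction k with
  | zero => intro t; simp [bil, loc]
  | succ k ih => intro t; simp [bil, ih]

/-! ### Terminals and the equilibrium potential -/

/-- The terminal `A` of the hexacarpet graph, where potentials vanish. -/
def AH (n : ℕ) : Set (Set Pt) := LsetH n 0 ∪ LsetH n 1
/-- The terminal `B` of the hexacarpet graph, where potentials equal `1`. -/
def BH (n : ℕ) : Set (Set Pt) := LsetH n 3 ∪ LsetH n 4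

lemma hexSide_coord {p : Pt} :
    (p ∈ hexSide 0 → ∃ a b : ℝ, 0 ≤ a ∧ 0 ≤ b ∧ a + b = 1 ∧ p = L (a, b)) ∧
    (p ∈ hexSide 1 → ∃ a b : ℝ, 0 ≤ a ∧ 0 ≤ b ∧ a + b = 1 ∧ p = L (-b, 1)) ∧
    (p ∈ hexSide 3 → ∃ a b : ℝ, 0 ≤ a ∧ 0 ≤ b ∧ a + b = 1 ∧ p = L (-a, -b)) ∧
    (p ∈ hexSide 4 → ∃ a b : ℝ, 0 ≤ a ∧ 0 ≤ b ∧ a + b = 1 ∧ p = L (b, -1)) := by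
  refine ⟨?_, ?_, ?_, ?_⟩ <;> rintro ⟨a, b, ha, hb, hab, rfl⟩ <;>
    refine ⟨a, b, ha, hb, hab, ?_⟩ <;> obtain rfl : b = 1 - a := by linarith
  · rw [corner0, corner1]; ext <;> simp [L]; ring
  · rw [corner1, corner2]; ext <;> simp [L] <;> ring
  · rw [corner3, corner4]; ext <;> simp [L] <;> ring
  · rw [corner4, corner5]; ext <;> simp [L] <;> ring

/-- In the sector charts the terminal `A` is the side `AB` of the first family of sectors, except
for the corners it shares with the neighbouring sectors. -/
lemma side_A (i : Fin 6) (x : Pt) (hx : Cl x) (h : aff (hs i) x ∈ hexSide 0 ∪ hexSide 1) :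
    (grp i = 0 ∧ x.2 = 0) ∨ x = (0, 0) := by
  obtain ⟨a1, a2, a3⟩ := hx
  rw [aff_hs] at h
  rcases h with h | h
  · obtain ⟨a, b, ha, hb, hab, e⟩ := hexSide_coord.1 h
    have e := L_inj e
    have h1 := congrArg Prod.fst e
    have h2 := congrArg Prod.snd e
    rw [Prod.ext_iff]
    fin_cases i <;> simp [sc, grp] at h1 h2 ⊢ <;>
      first | linarith | (constructor <;> linarith)
  · obtain ⟨a, b, ha, hb, hab, e⟩ := hexSide_coord.2.1 h
    have e := L_inj e
    have h1 := congrArg Prod.fst e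
    have h2 := congrArg Prod.snd e
    rw [Prod.ext_iff]
    fin_cases i <;> simp [sc, grp] at h1 h2 ⊢ <;>
      first | linarith | (constructor <;> linarith)

/-- In the sector charts the terminal `B` is the side `AB` of the third family of sectors, except
for the corners it shares with the neighbouring sectors. -/
lemma side_B (i : Fin 6) (x : Pt) (hx : Cl x) (h : aff (hs i) x ∈ hexSide 3 ∪ hexSide 4) :
    (grp i = 2 ∧ x.2 = 0) ∨ x = (1, 0) := by
  obtain ⟨a1, a2, a3⟩ := hx
  rw [aff_hs] at h
  rcases h with h | h
  · obtain ⟨a, b, ha, hb, hab, e⟩ := hexSide_coord.2.2.1 h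
    have e := L_inj e
    have h1 := congrArg Prod.fst e
    have h2 := congrArg Prod.snd e
    rw [Prod.ext_iff]
    fin_cases i <;> simp [sc, grp] at h1 h2 ⊢ <;>
      first | linarith | (constructor <;> linarith)
  · obtain ⟨a, b, ha, hb, hab, e⟩ := hexSide_coord.2.2.2 h
    have e := L_inj e
    have h1 := congrArg Prod.fst e
    have h2 := congrArg Prod.snd e
    rw [Prod.ext_iff]
    fin_cases i <;> simp [sc, grp] at h1 h2 ⊢ <;>
      first | linarith | (constructor <;> linarith)

lemma simp_chart {k : ℕ} {v : Set Pt} (hv : v ∈ Simp2 (k + 1) ∪ Simp1 (k + 1)) :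
    ∃ i, ∃ w ∈ Sx k ref, v = aff (hs i) '' w := by
  rw [Sx_simp, TriSet_eq] at hv
  obtain ⟨t, ht, hv⟩ := hv
  obtain ⟨i, hi⟩ := Set.mem_iUnion.1 ht
  have : v ∈ Sx k (hs i) := by rw [Sx_hs]; exact ⟨t, hi, hv⟩
  rw [Sx_ref] at this
  exact ⟨i, this⟩

lemma chart_A {k : ℕ} {v : Set Pt} (hv : v ∈ AH (k + 1)) :
    ∃ i, ∃ w ∈ Sx k ref, v = aff (hs i) '' w ∧ grp i = 0 ∧ ∀ x ∈ w, x.2 = 0 := by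
  have h1 : v ∈ Simp2 (k + 1) ∪ Simp1 (k + 1) := by rcases hv with h | h <;> exact h.1
  have h2 : ∀ p ∈ v, p ∈ hexSide 0 ∪ hexSide 1 := by
    intro p hp
    rcases hv with h | h
    · exact Or.inl (h.2 (subset_convexHull ℝ v hp))
    · exact Or.inr (h.2 (subset_convexHull ℝ v hp))
  obtain ⟨i, w, hw, rfl⟩ := simp_chart h1
  have h3 : ∀ x ∈ w, (grp i = 0 ∧ x.2 = 0) ∨ x = (0, 0) := fun x hx =>
    side_A i x (Sx_Cl hw x hx) (h2 _ ⟨x, hx, rfl⟩)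
  obtain ⟨x, hx, y, hy, hxy⟩ := Sx_nontrivial hw
  refine ⟨i, w, hw, rfl, ?_, ?_⟩
  · rcases h3 x hx with h | h
    · exact h.1
    · rcases h3 y hy with h' | h'
      · exact h'.1
      · exact absurd (h.trans h'.symm) hxy
  · intro z hz
    rcases h3 z hz with h | h
    · exact h.2
    · rw [h]

lemma chart_B {k : ℕ} {v : Set Pt} (hv : v ∈ BH (k + 1)) :
    ∃ i, ∃ w ∈ Sx k ref, v = aff (hs i) '' w ∧ grp i = 2 ∧ ∀ x ∈ w, x.2 = 0 := by
  have h1 : v ∈ Simp2 (k + 1) ∪ Simp1 (k + 1) := by rcases hv with h | h <;> exact h.1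
  have h2 : ∀ p ∈ v, p ∈ hexSide 3 ∪ hexSide 4 := by
    intro p hp
    rcases hv with h | h
    · exact Or.inl (h.2 (subset_convexHull ℝ v hp))
    · exact Or.inr (h.2 (subset_convexHull ℝ v hp))
  obtain ⟨i, w, hw, rfl⟩ := simp_chart h1
  have h3 : ∀ x ∈ w, (grp i = 2 ∧ x.2 = 0) ∨ x = (1, 0) := fun x hx =>
    side_B i x (Sx_Cl hw x hx) (h2 _ ⟨x, hx, rfl⟩)
  obtain ⟨x, hx, y, hy, hxy⟩ := Sx_nontrivial hw
  refine ⟨i, w, hw, rfl, ?_, ?_⟩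
  · rcases h3 x hx with h | h
    · exact h.1
    · rcases h3 y hy with h' | h'
      · exact h'.1
      · exact absurd (h.trans h'.symm) hxy
  · intro z hz
    rcases h3 z hz with h | h
    · exact h.2
    · rw [h]

lemma AB_disj {k : ℕ} {v : Set Pt} (hA : v ∈ AH (k + 1)) (hB : v ∈ BH (k + 1)) : False := by
  obtain ⟨i, w, hw, e, hi, hz⟩ := chart_A hA
  obtain ⟨j, w', hw', e', hj, hz'⟩ := chart_B hB
  obtain ⟨x, hx⟩ := (Sx_nontrivial hw).nonempty
  have : aff (hs i) x ∈ aff (hs j) '' w' := by rw [← e', e]; exact ⟨x, hx, rfl⟩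
  obtain ⟨y, hy, hxy⟩ := this
  obtain ⟨_, h2⟩ := sector_inter i j x y (Sx_Cl hw x hx) (Sx_Cl hw' y hy) hxy.symm
  obtain ⟨_, h3, h4⟩ := h2 (by rw [hi, hj]; decide)
  have h3 := h3 (Or.inl hi)
  have h4 := h4 (Or.inr hj)
  have := hz x hx
  linarith

/-- The equilibrium potential `h`, whose energy `C` is the effective conductance. By orthogonality
`h` pairs with every potential that is constant on the terminals as `C` times the difference. -/
lemma equilibrium (k : ℕ) : ∃ (h : Pot) (C : ℝ), RH (k + 1) = C⁻¹ ∧ hexForm k h h = C ∧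
    (∀ p ∈ AH (k + 1), h p = 0) ∧ (∀ p ∈ BH (k + 1), h p = 1) ∧
    (∀ (φ : Pot) (s : ℝ), (∀ p ∈ AH (k + 1), φ p = 0) → (∀ p ∈ BH (k + 1), φ p = s) →
      hexForm k h φ = s * C) ∧
    (∀ f : Pot, (∀ p ∈ AH (k + 1), f p = 0) → (∀ p ∈ BH (k + 1), f p = 1) →
      C ≤ hexForm k f f) := by
  classical
  have sos := hexForm_sos k
  let Z : Submodule ℝ Pot :=
    { carrier := {f | ∀ p ∈ AH (k + 1) ∪ BH (k + 1), f p = 0}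
      add_mem' := by intro f g hf hg p hp; simp [hf p hp, hg p hp]
      zero_mem' := by intro p hp; rfl
      smul_mem' := by intro c f hf p hp; simp [hf p hp] }
  let u : Pot := fun p => if p ∈ BH (k + 1) then 1 else 0
  obtain ⟨h, hu, ho⟩ := sos.exists_min Z u
  have hA : ∀ p ∈ AH (k + 1), h p = 0 := by
    intro p hp
    have h1 := hu p (Or.inl hp)
    have h2 : u p = 0 := if_neg fun hB => AB_disj hp hB
    simp only [Pi.sub_apply] at h1; linarith
  have hB : ∀ p ∈ BH (k + 1), h p = 1 := by
    intro p hp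
    have h1 := hu p (Or.inr hp)
    have h2 : u p = 1 := if_pos hp
    simp only [Pi.sub_apply] at h1; linarith
  have hφ : ∀ (φ : Pot) (s : ℝ), (∀ p ∈ AH (k + 1), φ p = 0) → (∀ p ∈ BH (k + 1), φ p = s) →
      hexForm k h φ = s * hexForm k h h := by
    intro φ s h1 h2
    have : φ - s • h ∈ Z := by
      rintro p (hp | hp)
      · simp [h1 p hp, hA p hp]
      · simp [h2 p hp, hB p hp]
    have := ho _ this
    rw [sos.sub_right, sos.smul_right] at this
    linarith
  have hmin : ∀ f : Pot, (∀ p ∈ AH (k + 1), f p = 0) → (∀ p ∈ BH (k + 1), f p = 1) →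
      hexForm k h h ≤ hexForm k f f := by
    intro f h1 h2
    have e := hφ f 1 h1 h2
    have p := sos.nonneg (f - h)
    rw [sos.sub_right, sos.comm _ f, sos.comm _ h, sos.sub_right, sos.sub_right,
      sos.comm f h, e] at p
    linarith
  refine ⟨h, _, ?_, rfl, hA, hB, hφ, hmin⟩
  rw [RH, effRes]
  congr 1
  refine IsLeast.csInf_eq ⟨⟨h, hA, hB, (energy_eq k h).symm⟩, ?_⟩
  rintro e ⟨f, h1, h2, rfl⟩
  rw [energy_eq]
  exact hmin f h1 h2

/-! ### Cutting along the spokes and side averages -/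

/-- Sets with at least two points on the side `AB` of the reference triangle `ABC`, which the
sector charts map to a side of the hexagon. Nontriviality makes `onAB`, `onAC`, `onBC` mutually
exclusive. -/
def onAB (w : Set Pt) : Prop := w.Nontrivial ∧ ∀ x ∈ w, x.2 = 0
/-- Sets with at least two points on the side `AC`, mapped to a spoke by the charts. -/
def onAC (w : Set Pt) : Prop := w.Nontrivial ∧ ∀ x ∈ w, x.1 = 0
/-- Sets with at least two points on the side `BC`, mapped to a spoke by the charts. -/
def onBC (w : Set Pt) : Prop := w.Nontrivial ∧ ∀ x ∈ w, x.1 + x.2 = 1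

lemma not_AB_AC {w : Set Pt} (h : onAB w) (h' : onAC w) : False := by
  obtain ⟨x, hx, y, hy, hxy⟩ := h.1
  exact hxy (Prod.ext_iff.2 ⟨by rw [h'.2 x hx, h'.2 y hy], by rw [h.2 x hx, h.2 y hy]⟩)

lemma not_AB_BC {w : Set Pt} (h : onAB w) (h' : onBC w) : False := by
  obtain ⟨x, hx, y, hy, hxy⟩ := h.1
  exact hxy (Prod.ext_iff.2 ⟨by linarith [h'.2 x hx, h'.2 y hy, h.2 x hx, h.2 y hy],
    by rw [h.2 x hx, h.2 y hy]⟩)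

lemma not_AC_BC {w : Set Pt} (h : onAC w) (h' : onBC w) : False := by
  obtain ⟨x, hx, y, hy, hxy⟩ := h.1
  exact hxy (Prod.ext_iff.2 ⟨by rw [h.2 x hx, h.2 y hy],
    by linarith [h'.2 x hx, h'.2 y hy, h.2 x hx, h.2 y hy]⟩)

/-- Potentials on the three families of sectors that agree on the spokes glue to a potential
on the hexagon. -/
lemma glue (k : ℕ) (τ : Fin 3 → Pot) (hac : ∀ w, onAC w → τ 0 w = τ 1 w)
    (hbc : ∀ w, onBC w → τ 1 w = τ 2 w) :
    ∃ φ : Pot, ∀ i, ∀ w ∈ Sx k ref, φ (aff (hs i) '' w) = τ (grp i) w := by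
  classical
  have sub : ∀ i j w w', w ∈ Sx k ref → w' ∈ Sx k ref → aff (hs i) '' w = aff (hs j) '' w' →
      w ⊆ w' := by
    intro i j w w' hw hw' e x hx
    have : aff (hs i) x ∈ aff (hs j) '' w' := by rw [← e]; exact ⟨x, hx, rfl⟩
    obtain ⟨y, hy, hxy⟩ := this
    rw [(sector_inter i j x y (Sx_Cl hw x hx) (Sx_Cl hw' y hy) hxy.symm).1]; exact hy
  have cons : ∀ i j w w', w ∈ Sx k ref → w' ∈ Sx k ref → aff (hs i) '' w = aff (hs j) '' w' →
      τ (grp i) w = τ (grp j) w' := by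
    intro i j w w' hw hw' e
    obtain rfl : w = w' := (sub i j w w' hw hw' e).antisymm (sub j i w' w hw' hw e.symm)
    by_cases hg : grp i = grp j
    · rw [hg]
    have nt := Sx_nontrivial hw
    have H : ∀ x ∈ w, ((grp i = 0 ∨ grp j = 0) → x.1 = 0) ∧
        ((grp i = 2 ∨ grp j = 2) → x.1 + x.2 = 1) := by
      intro x hx
      have : aff (hs i) x ∈ aff (hs j) '' w := by rw [← e]; exact ⟨x, hx, rfl⟩
      obtain ⟨y, hy, hxy⟩ := this
      exact ((sector_inter i j x y (Sx_Cl hw x hx) (Sx_Cl hw y hy) hxy.symm).2 hg).2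
    have HA : (grp i = 0 ∨ grp j = 0) → onAC w := fun h => ⟨nt, fun x hx => (H x hx).1 h⟩
    have HB : (grp i = 2 ∨ grp j = 2) → onBC w := fun h => ⟨nt, fun x hx => (H x hx).2 h⟩
    generalize grp i = a at *
    generalize grp j = b at *
    fin_cases a <;> fin_cases b <;> simp at HA HB hg ⊢
    · exact hac w HA
    · exact (not_AC_BC HA HB).elim
    · exact (hac w HA).symm
    · exact hbc w HB
    · exact (not_AC_BC HA HB).elim
    · exact (hbc w HB).symm
  -- a value `0` away from the simplices of the subdivision is irrelevant
  refine ⟨fun v => if h : ∃ p : Fin 6 × Set Pt, p.2 ∈ Sx k ref ∧ v = aff (hs p.1) '' p.2 then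
    τ (grp h.choose.1) h.choose.2 else 0, fun i w hw => ?_⟩
  have h : ∃ p : Fin 6 × Set Pt, p.2 ∈ Sx k ref ∧ aff (hs i) '' w = aff (hs p.1) '' p.2 :=
    ⟨(i, w), hw, rfl⟩
  simp only [dif_pos h]
  exact (cons _ _ _ _ hw h.choose_spec.1 h.choose_spec.2).symm

/-- The equilibrium potential cut along the spokes and folded onto the reference triangle: `F`,
`G`, `H` are the sums of its restrictions to the families `{0, 1}`, `{2, 5}`, `{3, 4}`. Their
energy pairing with potentials that glue across the spokes is the total flux `C` times the
potential difference of the terminals. -/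
lemma cut (k : ℕ) : ∃ (C : ℝ) (F G H : Pot), RH (k + 1) = C⁻¹ ∧
    (∀ f : Pot, (∀ p ∈ AH (k + 1), f p = 0) → (∀ p ∈ BH (k + 1), f p = 1) →
      C ≤ hexForm k f f) ∧
    (∀ (τ₀ τ₁ τ₂ : Pot) (s : ℝ), (∀ w, onAC w → τ₀ w = τ₁ w) → (∀ w, onBC w → τ₁ w = τ₂ w) →
      (∀ w, onAB w → τ₀ w = 0) → (∀ w, onAB w → τ₂ w = s) →
      bil k ref F τ₀ + bil k ref G τ₁ + bil k ref H τ₂ = s * C) ∧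
    bil k ref F F + bil k ref G G ≤ 2 * C := by
  obtain ⟨h, C, hR, hC, hA, hB, hφ, hmin⟩ := equilibrium k
  have sos := bil_sos k ref
  let p : Fin 6 → Pot := fun i w => h (aff (hs i) '' w)
  refine ⟨C, p 0 + p 1, p 2 + p 5, p 3 + p 4, hR, hmin, ?_, ?_⟩
  · intro τ₀ τ₁ τ₂ s hac hbc h0 h2
    obtain ⟨φ, hg⟩ := glue k ![τ₀, τ₁, τ₂] hac hbc
    have e1 : hexForm k h φ = s * C := by
      apply hφ
      · intro v hv
        obtain ⟨i, w, hw, rfl, hi, hz⟩ := chart_A hv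
        rw [hg i w hw, hi]; exact h0 w ⟨Sx_nontrivial hw, hz⟩
      · intro v hv
        obtain ⟨i, w, hw, rfl, hi, hz⟩ := chart_B hv
        rw [hg i w hw, hi]; exact h2 w ⟨Sx_nontrivial hw, hz⟩
    have e2 : hexForm k h φ = ∑ i, bil k ref (p i) (![τ₀, τ₁, τ₂] (grp i)) := by
      refine Finset.sum_congr rfl fun i _ => ?_
      rw [← bil_hs, bil_ref]
      exact bil_congr k _ _ _ _ ref (fun _ _ => rfl) (fun w hw => hg i w hw)
    rw [← e1, e2, sos.add_left, sos.add_left, sos.add_left]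
    simp [Fin.sum_univ_succ, grp]
    ring
  · have e2 : hexForm k h h = ∑ i, bil k ref (p i) (p i) := by
      refine Finset.sum_congr rfl fun i _ => ?_
      rw [← bil_hs, bil_ref]
    rw [← hC, e2]
    have h1 := sos.add_self_le (p 0) (p 1)
    have h2 := sos.add_self_le (p 2) (p 5)
    have h3 := sos.nonneg (p 3)
    have h4 := sos.nonneg (p 4)
    simp only [Fin.sum_univ_six]
    linarith

/-- The flux of `F` through `AB`, normalized by the total flux `C`, averages a potential over `AB`;
likewise `ν` and `ν'` average over `AC` and `BC`. Away from the sides `F` and `G` are harmonic,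
so the increments of the averages are pairings with `F` and `G`, whose energy is at most `2 * C`
in total. -/
lemma traces {k : ℕ} {C : ℝ} (hC : 0 < C) {F G H : Pot}
    (hP : ∀ (τ₀ τ₁ τ₂ : Pot) (s : ℝ), (∀ w, onAC w → τ₀ w = τ₁ w) →
      (∀ w, onBC w → τ₁ w = τ₂ w) → (∀ w, onAB w → τ₀ w = 0) → (∀ w, onAB w → τ₂ w = s) →
      bil k ref F τ₀ + bil k ref G τ₁ + bil k ref H τ₂ = s * C)
    (hE : bil k ref F F + bil k ref G G ≤ 2 * C) :
    ∃ μ ν ν' : Pot → ℝ,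
      (∀ τ τ', (∀ w ∈ Sx k ref, onAB w → τ w = τ' w) → μ τ = μ τ') ∧
      (∀ τ τ', (∀ w, onAC w → τ w = τ' w) → ν τ = ν τ') ∧
      (∀ τ τ', (∀ w, onBC w → τ w = τ' w) → ν' τ = ν' τ') ∧
      (∀ s : ℝ, μ (fun _ => s) = s) ∧
      ∀ τ, (ν τ - μ τ) ^ 2 + (ν' τ - ν τ) ^ 2 ≤ 2 / C * bil k ref τ τ := by
  classical
  have sos := bil_sos k ref
  let rAB : Pot → Pot := fun τ w => if onAB w then τ w else 0
  let rAC : Pot → Pot := fun τ w => if onAC w then τ w else 0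
  let rBC : Pot → Pot := fun τ w => if onBC w then τ w else 0
  have hAB : ∀ τ w, onAB w → rAB τ w = τ w ∧ rAC τ w = 0 ∧ rBC τ w = 0 := fun τ w h =>
    ⟨if_pos h, if_neg fun h' => not_AB_AC h h', if_neg fun h' => not_AB_BC h h'⟩
  have hAC : ∀ τ w, onAC w → rAB τ w = 0 ∧ rAC τ w = τ w ∧ rBC τ w = 0 := fun τ w h =>
    ⟨if_neg fun h' => not_AB_AC h' h, if_pos h, if_neg fun h' => not_AC_BC h h'⟩
  have hBC : ∀ τ w, onBC w → rAB τ w = 0 ∧ rAC τ w = 0 ∧ rBC τ w = τ w := fun τ w h =>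
    ⟨if_neg fun h' => not_AB_BC h' h, if_neg fun h' => not_AC_BC h' h, if_pos h⟩
  have b0 : ∀ f : Pot, bil k ref f 0 = 0 := fun f => bil_const k 0 f ref
  refine ⟨fun τ => - bil k ref F (rAB τ) / C, fun τ => bil k ref F (rAC τ) / C,
    fun τ => bil k ref G (rBC τ) / C, ?_, ?_, ?_, ?_, ?_⟩
  · intro τ τ' h
    have : bil k ref F (rAB τ) = bil k ref F (rAB τ') := by
      refine bil_congr k _ _ _ _ ref (fun _ _ => rfl) fun w hw => ?_
      by_cases hw' : onAB w
      · rw [(hAB τ w hw').1, (hAB τ' w hw').1, h w hw hw']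
      · simp [rAB, hw']
    simp only [this]
  · intro τ τ' h
    have : rAC τ = rAC τ' := by
      funext w; by_cases hw' : onAC w
      · rw [(hAC τ w hw').2.1, (hAC τ' w hw').2.1, h w hw']
      · simp [rAC, hw']
    simp only [this]
  · intro τ τ' h
    have : rBC τ = rBC τ' := by
      funext w; by_cases hw' : onBC w
      · rw [(hBC τ w hw').2.2, (hBC τ' w hw').2.2, h w hw']
      · simp [rBC, hw']
    simp only [this]
  · intro s
    -- the test potential `s` everywhere except for the value `0` on the terminal `A`
    have h1 := hP ((fun _ => s) - rAB (fun _ => s)) (fun _ => s) (fun _ => s) s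
      (fun w hw => by simp [(hAC (fun _ => s) w hw).1]) (fun _ _ => rfl)
      (fun w hw => by simp [(hAB (fun _ => s) w hw).1]) (fun _ _ => rfl)
    rw [sos.sub_right, bil_const, bil_const, bil_const] at h1
    rw [div_eq_iff hC.ne']; linarith
  · intro τ
    have h1 : bil k ref F τ = bil k ref F (rAB τ) + bil k ref F (rAC τ) := by
      have := hP (τ - rAB τ - rAC τ) 0 0 0
        (fun w hw => by simp [(hAC τ w hw).1, (hAC τ w hw).2.1]) (fun _ _ => rfl)
        (fun w hw => by simp [(hAB τ w hw).1, (hAB τ w hw).2.1]) (fun _ _ => rfl)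
      rw [sos.sub_right, sos.sub_right, b0, b0] at this
      linarith
    have h2 : bil k ref G τ = bil k ref G (rAC τ) + bil k ref G (rBC τ) := by
      have := hP 0 (τ - rAC τ - rBC τ) 0 0
        (fun w hw => by simp [(hAC τ w hw).2.1, (hAC τ w hw).2.2])
        (fun w hw => by simp [(hBC τ w hw).2.1, (hBC τ w hw).2.2])
        (fun _ _ => rfl) (fun _ _ => rfl)
      rw [sos.sub_right, sos.sub_right, b0, b0] at this
      linarith
    -- conservation of flux across the spokes `AC`
    have h3 : bil k ref F (rAC τ) + bil k ref G (rAC τ) = 0 := by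
      have := hP (rAC τ) (rAC τ) 0 0 (fun _ _ => rfl)
        (fun w hw => by simp [(hBC τ w hw).2.1]) (fun w hw => by simp [(hAB τ w hw).2.1])
        (fun _ _ => rfl)
      rw [b0] at this
      linarith
    have e1 : bil k ref F (rAC τ) / C - - bil k ref F (rAB τ) / C = bil k ref F τ / C := by
      rw [h1]; ring
    have e2 : bil k ref G (rBC τ) / C - bil k ref F (rAC τ) / C = bil k ref G τ / C := by
      rw [h2, show bil k ref G (rAC τ) = - bil k ref F (rAC τ) by linarith]; ring
    have c1 := sos.cs F τ
    have c2 := sos.cs G τ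
    have n := sos.nonneg τ
    simp only [e1, e2, div_pow]
    rw [← add_div, div_mul_eq_mul_div, div_le_div_iff₀ (by positivity) hC]
    have : bil k ref F τ ^ 2 + bil k ref G τ ^ 2 ≤ 2 * C * bil k ref τ τ := by nlinarith
    nlinarith

/-! ### The coarse potential -/

/-- Chart of the segment from `p` to `q`, reading only the first reference coordinate. -/
def edgeChart (p q : Pt) (x : Pt) : Pt := p + x.1 • (q - p)

lemma aff_AB (s : Tri) {w : Set Pt} (hw : onAB w) : aff s '' w = edgeChart s.1 s.2.1 '' w :=
  Set.image_congr fun x hx => by simp [aff, edgeChart, hw.2 x hx]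

lemma aff_AC {s s' : Tri} (h1 : s.1 = s'.1) (h2 : s.2.2 = s'.2.2) {w : Set Pt} (hw : onAC w) :
    aff s '' w = aff s' '' w :=
  Set.image_congr fun x hx => by simp [aff, h1, h2, hw.2 x hx]

lemma aff_BC {s s' : Tri} (h1 : s.2.1 = s'.2.1) (h2 : s.2.2 = s'.2.2) {w : Set Pt}
    (hw : onBC w) : aff s '' w = aff s' '' w :=
  Set.image_congr fun x hx => by
    have e : x.1 = 1 - x.2 := by linarith [hw.2 x hx]
    ext <;> simp [aff, h1, h2, e] <;> ring

/-- A symmetric function of pairs of points extends to triangles by averaging over the three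
edges. The extension is the mean over all ordered pairs of distinct elements. -/
lemma exists_average (P : Pt → Pt → ℝ) (h0 : ∀ x, P x x = 0) (hs : ∀ x y, P x y = P y x) :
    ∃ g : Pot, (∀ x y, x ≠ y → g {x, y} = P x y) ∧
      ∀ t, det t ≠ 0 → g (st t) = (P t.1 t.2.1 + P t.2.1 t.2.2 + P t.1 t.2.2) / 3 := by
  refine ⟨fun v => (∑ᶠ x ∈ v, ∑ᶠ y ∈ v, P x y) / (v.ncard * (v.ncard - 1)), ?_, ?_⟩
  · intro x y hxy
    simp only [finsum_mem_pair hxy, Set.ncard_pair hxy, h0, hs y x]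
    norm_num
  · intro t ht
    obtain ⟨h1, h2, h3⟩ := det_ne t ht
    have hc : (st t).ncard = 3 := by
      rw [st, Set.ncard_insert_of_notMem (by simp [h1, h3]), Set.ncard_pair h2]
    have hsum : ∀ φ : Pt → ℝ, ∑ᶠ x ∈ st t, φ x = φ t.1 + (φ t.2.1 + φ t.2.2) := fun φ => by
      rw [st, finsum_mem_insert _ (by simp [h1, h3]) (Set.toFinite _), finsum_mem_pair h2]
    simp only [hsum, hc, h0, hs t.2.1 t.1, hs t.2.2 t.1, hs t.2.2 t.2.1]
    norm_num
    ring

lemma sq_sum_six (a b c d e f : ℝ) : (a + b + c + d + e + f) ^ 2 ≤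
    6 * (a ^ 2 + b ^ 2 + c ^ 2 + d ^ 2 + e ^ 2 + f ^ 2) := by
  have := sq_sum_le_card_mul_sum_sq (s := Finset.univ) (f := ![a, b, c, d, e, f])
  simp [Fin.sum_univ_six] at this
  linarith

/-- Comparison of a coarse triangle with its six children. `α` are the traces on the children's
outer half-edges, `p, q, r` those on the spokes through the vertices, and `u, v, w` those on the
spokes through the edge midpoints. -/
lemma star_ineq (α : Fin 6 → ℝ) (p q r u v w : ℝ) :
    let x := (α 0 + α 1) / 2
    let y := (α 2 + α 3) / 2
    let z := (α 4 + α 5) / 2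
    let M := (x + y + z) / 3
    1 / 2 * ((x - M) * (x - M) + (y - M) * (y - M) + (z - M) * (z - M)) ≤
      2 / 3 * (((p - α 0) ^ 2 + (u - p) ^ 2) + ((q - α 1) ^ 2 + (u - q) ^ 2)
        + ((q - α 2) ^ 2 + (v - q) ^ 2) + ((r - α 3) ^ 2 + (v - r) ^ 2)
        + ((p - α 4) ^ 2 + (w - p) ^ 2) + ((r - α 5) ^ 2 + (w - r) ^ 2)) := by
  intro x y z M
  have h1 := sq_sum_six (w - r) (-(w - p)) (r - α 3) (q - α 2) (-(p - α 0)) (-(q - α 1))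
  have h2 := sq_sum_six (u - p) (-(u - q)) (p - α 4) (r - α 5) (-(q - α 2)) (-(r - α 3))
  have h3 := sq_sum_six (v - r) (-(v - q)) (r - α 5) (p - α 4) (-(p - α 0)) (-(q - α 1))
  -- differences of edge means, telescoped along the spokes they cross
  have e1 : (w - r) + -(w - p) + (r - α 3) + (q - α 2) + -(p - α 0) + -(q - α 1)
    = 2 * (x - y) := by simp only [x, y]; ring
  have e2 : (u - p) + -(u - q) + (p - α 4) + (r - α 5) + -(q - α 2) + -(r - α 3)
    = 2 * (y - z) := by simp only [y, z]; ring
  have e3 : (v - r) + -(v - q) + (r - α 5) + (p - α 4) + -(p - α 0) + -(q - α 1)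
    = 2 * (x - z) := by simp only [x, z]; ring
  rw [e1] at h1; rw [e2] at h2; rw [e3] at h3
  have e : (x - M) * (x - M) + (y - M) * (y - M) + (z - M) * (z - M)
    = 1 / 3 * ((x - y) ^ 2 + (y - z) ^ 2 + (x - z) ^ 2) := by simp only [M]; ring
  rw [e]
  nlinarith [sq_nonneg (p - α 0), sq_nonneg (q - α 1), sq_nonneg (q - α 2), sq_nonneg (r - α 3),
    sq_nonneg (p - α 4), sq_nonneg (r - α 5), sq_nonneg (u - p), sq_nonneg (u - q),
    sq_nonneg (v - q), sq_nonneg (v - r), sq_nonneg (w - p), sq_nonneg (w - r)]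

/-- The mean trace of `f` over the two halves of the edge with endpoints `x` and `y`. Each half
is charted starting from its endpoint, so the value depends only on the unordered pair. The value
`0` on the diagonal lets `exists_average` sum over all ordered pairs. -/
def edgeMean (μ : Pot → ℝ) (f : Pot) (x y : Pt) : ℝ :=
  if x = y then 0 else
    (μ (fun w => f (edgeChart x (mpt x y) '' w)) + μ (fun w => f (edgeChart y (mpt x y) '' w))) / 2

lemma edgeMean_symm (μ : Pot → ℝ) (f : Pot) (x y : Pt) :
    edgeMean μ f x y = edgeMean μ f y x := by
  simp only [edgeMean, mpt_comm y x, eq_comm (a := y)]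
  split_ifs
  · rfl
  · ring

/-- The coarse potential has, on each coarse triangle, at most `4/(3C)` times the energy of the
fine one. -/
lemma loc_le {k : ℕ} {C : ℝ} (hC : 0 < C) {μ ν ν' : Pot → ℝ}
    (hμ : ∀ τ τ', (∀ w ∈ Sx k ref, onAB w → τ w = τ' w) → μ τ = μ τ')
    (hν : ∀ τ τ', (∀ w, onAC w → τ w = τ' w) → ν τ = ν τ')
    (hν' : ∀ τ τ', (∀ w, onBC w → τ w = τ' w) → ν' τ = ν' τ')
    (hQ : ∀ τ, (ν τ - μ τ) ^ 2 + (ν' τ - ν τ) ^ 2 ≤ 2 / C * bil k ref τ τ)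
    {f g : Pot} (g2 : ∀ x y, x ≠ y → g {x, y} = edgeMean μ f x y)
    (g3 : ∀ t, det t ≠ 0 → g (st t) =
      (edgeMean μ f t.1 t.2.1 + edgeMean μ f t.2.1 t.2.2 + edgeMean μ f t.1 t.2.2) / 3)
    (t : Tri) (ht : det t ≠ 0) : loc t g g ≤ 4 / (3 * C) * bil (k + 1) t f f := by
  obtain ⟨h1, h2, h3⟩ := det_ne t ht
  let F : Fin 6 → Pot := fun j w => f (aff (child t j) '' w)
  have hα : ∀ j, μ (F j) = μ fun w => f (edgeChart (child t j).1 (child t j).2.1 '' w) := fun j =>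
    hμ _ _ fun w _ hw => congrArg f (aff_AB _ hw)
  have hAC : ∀ i j, (child t i).1 = (child t j).1 → ν (F i) = ν (F j) := fun i j h =>
    hν _ _ fun w hw => congrArg f (aff_AC h (by fin_cases i <;> fin_cases j <;> rfl) hw)
  have hBC : ∀ i j, (child t i).2.1 = (child t j).2.1 → ν' (F i) = ν' (F j) := fun i j h =>
    hν' _ _ fun w hw => congrArg f (aff_BC h (by fin_cases i <;> fin_cases j <;> rfl) hw)
  have key := star_ineq (fun j => μ (F j)) (ν (F 0)) (ν (F 1)) (ν (F 3)) (ν' (F 0)) (ν' (F 2))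
    (ν' (F 4))
  have m1 : edgeMean μ f t.1 t.2.1 = (μ (F 0) + μ (F 1)) / 2 := by
    rw [edgeMean, if_neg h1, hα, hα]; rfl
  have m2 : edgeMean μ f t.2.1 t.2.2 = (μ (F 2) + μ (F 3)) / 2 := by
    rw [edgeMean, if_neg h2, hα, hα]; rfl
  have m3 : edgeMean μ f t.1 t.2.2 = (μ (F 4) + μ (F 5)) / 2 := by
    rw [edgeMean, if_neg h3, hα, hα]; rfl
  have hl := g3 t ht
  rw [loc, g2 _ _ h1, g2 _ _ h2, g2 _ _ h3, hl, m1, m2, m3]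
  refine key.trans ?_
  have hj : ∀ j, (ν (F j) - μ (F j)) ^ 2 + (ν' (F j) - ν (F j)) ^ 2 ≤
      2 / C * bil k (child t j) f f := fun j => by rw [bil_ref]; exact hQ _
  have q0 := hj 0
  have q1 := hj 1
  have q2 := hj 2
  have q3 := hj 3
  have q4 := hj 4
  have q5 := hj 5
  rw [← hBC 0 1 rfl] at q1
  rw [← hAC 1 2 rfl] at q2
  rw [← hBC 2 3 rfl] at q3
  rw [← hAC 0 4 rfl] at q4
  rw [← hAC 3 5 rfl, ← hBC 4 5 rfl] at q5
  have e : 4 / (3 * C) * bil (k + 1) t f f = 2 / 3 * ∑ j, 2 / C * bil k (child t j) f f := by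
    rw [bil, ← Finset.mul_sum]; field_simp; ring
  rw [e, Fin.sum_univ_six]
  refine mul_le_mul_of_nonneg_left ?_ (by norm_num)
  linarith

/-- Summation of a comparison of local energies over the `j`-fold subdivision. -/
lemma bil_le {n : ℕ} {K : ℝ} {f g : Pot}
    (h : ∀ t, det t ≠ 0 → loc t g g ≤ K * bil n t f f) (j : ℕ) :
    ∀ t, det t ≠ 0 → bil j t g g ≤ K * bil (j + n) t f f := by
  induction j with
  | zero => simpa [bil] using h
  | succ j ih =>
    intro t ht
    rw [show j + 1 + n = j + n + 1 by ring, bil, bil, Finset.mul_sum]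
    exact Finset.sum_le_sum fun i _ => ih _ (det_child t ht i)

/-- A potential equal to `c` on a side of the hexagon has trace `c` along every edge of the
subdivision lying in that side. -/
lemma trace_side {m k i : ℕ} {c : ℝ} {μ : Pot → ℝ} {f : Pot}
    (hμ : ∀ τ τ', (∀ w ∈ Sx k ref, onAB w → τ w = τ' w) → μ τ = μ τ')
    (hμc : ∀ s : ℝ, μ (fun _ => s) = s)
    (hf : ∀ v ∈ LsetH (m + 1 + k) i, f v = c) {s : Tri} (hs : s ∈ TriSet (m + 1))
    (h1 : s.1 ∈ hexSide i) (h2 : s.2.1 ∈ hexSide i) :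
    μ (fun w => f (edgeChart s.1 s.2.1 '' w)) = c := by
  rw [← hμc c]
  refine hμ _ _ fun w hw hAB => hf _ ⟨?_, ?_⟩
  · rw [Sx_simp, ← aff_AB s hAB]
    obtain ⟨u, hu, h⟩ := (Sx_ref k s _).2 ⟨w, hw, rfl⟩
    exact ⟨u, desc_TriSet (by omega) hs k hu, h⟩
  · have hc : Convex ℝ (hexSide i) := convex_segment _ _
    refine convexHull_min ?_ hc
    rintro _ ⟨x, hx, rfl⟩
    obtain ⟨a1, a2, a3⟩ := Sx_Cl hw x hx
    exact hc.add_smul_sub_mem h1 h2 ⟨a1, by linarith⟩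

lemma mpt_side {i : ℕ} {x y : Pt} (hx : x ∈ hexSide i) (hy : y ∈ hexSide i) :
    mpt x y ∈ hexSide i := by
  have := (convex_segment (hexCorner i) (hexCorner (i + 1)) : Convex ℝ (hexSide i)) hx hy
    (show (0 : ℝ) ≤ 2⁻¹ by norm_num) (show (0 : ℝ) ≤ 2⁻¹ by norm_num) (by norm_num)
  rwa [← smul_add] at this

/-- The coarse potential inherits boundary values from the fine one. -/
lemma coarse_side {m k i : ℕ} (hm : 1 ≤ m) {c : ℝ} {μ : Pot → ℝ} {f g : Pot}
    (hμ : ∀ τ τ', (∀ w ∈ Sx k ref, onAB w → τ w = τ' w) → μ τ = μ τ')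
    (hμc : ∀ s : ℝ, μ (fun _ => s) = s)
    (g2 : ∀ x y, x ≠ y → g {x, y} = edgeMean μ f x y)
    (g3 : ∀ t, det t ≠ 0 → g (st t) =
      (edgeMean μ f t.1 t.2.1 + edgeMean μ f t.2.1 t.2.2 + edgeMean μ f t.1 t.2.2) / 3)
    (hf : ∀ v ∈ LsetH (m + (k + 1)) i, f v = c) : ∀ v ∈ LsetH m i, g v = c := by
  rintro v ⟨hv, hside⟩
  have hp : ∀ p ∈ v, p ∈ hexSide i := fun p hp => hside (subset_convexHull ℝ v hp)
  rw [Sx_simp] at hv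
  obtain ⟨t, ht, hv⟩ := hv
  have hd := TriSet_det hm ht
  obtain ⟨h1, h2, h3⟩ := det_ne t hd
  have hch : ∀ j, child t j ∈ TriSet (m + 1) := fun j =>
    desc_TriSet hm ht 1 (by simp [desc])
  rw [show m + (k + 1) = m + 1 + k by ring] at hf
  have tr : ∀ j, (child t j).1 ∈ hexSide i → (child t j).2.1 ∈ hexSide i →
      μ (fun w => f (edgeChart (child t j).1 (child t j).2.1 '' w)) = c := fun j =>
    trace_side hμ hμc hf (hch j)
  have m1 : t.1 ∈ hexSide i → t.2.1 ∈ hexSide i → edgeMean μ f t.1 t.2.1 = c := fun a b => by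
    have e0 := tr 0 a (mpt_side a b)
    have e1 := tr 1 b (mpt_side a b)
    simp only [child, Matrix.cons_val] at e0 e1
    rw [edgeMean, if_neg h1]; simp only [e0, e1]; ring
  have m2 : t.2.1 ∈ hexSide i → t.2.2 ∈ hexSide i → edgeMean μ f t.2.1 t.2.2 = c := fun a b => by
    have e0 := tr 2 a (mpt_side a b)
    have e1 := tr 3 b (mpt_side a b)
    simp only [child, Matrix.cons_val] at e0 e1
    rw [edgeMean, if_neg h2]; simp only [e0, e1]; ring
  have m3 : t.1 ∈ hexSide i → t.2.2 ∈ hexSide i → edgeMean μ f t.1 t.2.2 = c := fun a b => by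
    have e0 := tr 4 a (mpt_side a b)
    have e1 := tr 5 b (mpt_side a b)
    simp only [child, Matrix.cons_val] at e0 e1
    rw [edgeMean, if_neg h3]; simp only [e0, e1]; ring
  simp only [Sx0, Set.mem_insert_iff, Set.mem_singleton_iff] at hv
  rcases hv with rfl | rfl | rfl | rfl
  · rw [g2 _ _ h1, m1 (hp _ (by simp)) (hp _ (by simp))]
  · rw [g2 _ _ h2, m2 (hp _ (by simp)) (hp _ (by simp))]
  · rw [g2 _ _ h3, m3 (hp _ (by simp)) (hp _ (by simp))]
  · have a := hp t.1 (by simp [st])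
    have b := hp t.2.1 (by simp [st])
    have d := hp t.2.2 (by simp [st])
    rw [g3 t hd, m1 a b, m2 b d, m3 a d]; ring

/-! ### Comparison of conductances -/

/-- Conductances are supermultiplicative up to the factor `3/4`. -/
lemma cond_mul_le (j k : ℕ) (hpos : 0 < (RH (k + 1))⁻¹) :
    3 / 4 * (RH (j + 1))⁻¹ * (RH (k + 1))⁻¹ ≤ (RH (j + 1 + (k + 1)))⁻¹ := by
  obtain ⟨C, F, G, H, hR, -, hP, hE⟩ := cut k
  obtain ⟨f, D, hRf, hfD, hfA, hfB, -, -⟩ := equilibrium (j + (k + 1))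
  obtain ⟨-, B, hRB, -, -, -, -, hmin⟩ := equilibrium j
  rw [show j + (k + 1) + 1 = j + 1 + (k + 1) by ring] at hRf hfA hfB
  rw [hR, inv_inv] at hpos ⊢
  rw [hRB, inv_inv, hRf, inv_inv]
  obtain ⟨μ, ν, ν', hμ, hν, hν', hμc, hQ⟩ := traces hpos hP hE
  obtain ⟨g, g2, g3⟩ := exists_average (edgeMean μ f) (fun x => if_pos rfl) (edgeMean_symm μ f)
  have le : hexForm j g g ≤ 4 / (3 * C) * D := by
    rw [← hfD, hexForm, hexForm, Finset.mul_sum]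
    exact Finset.sum_le_sum fun i _ =>
      bil_le (loc_le hpos hμ hν hν' hQ g2 g3) j _ (det_sec i)
  have side := fun i c => coarse_side (m := j + 1) (i := i) (c := c) (by omega) hμ hμc g2 g3
  have hB : B ≤ hexForm j g g := by
    apply hmin
    · rintro v (hv | hv)
      · exact side 0 0 (fun v hv => hfA v (Or.inl hv)) v hv
      · exact side 1 0 (fun v hv => hfA v (Or.inr hv)) v hv
    · rintro v (hv | hv)
      · exact side 3 1 (fun v hv => hfB v (Or.inl hv)) v hv
      · exact side 4 1 (fun v hv => hfB v (Or.inr hv)) v hv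
  have := hB.trans le
  rw [div_mul_eq_mul_div, le_div_iff₀ (by positivity)] at this
  linarith

lemma loc_zero {t : Tri} {f : Pot} (h : loc t f f = 0) : f {t.1, t.2.1} = f (st t) ∧
    f {t.2.1, t.2.2} = f (st t) ∧ f {t.1, t.2.2} = f (st t) := by
  unfold loc at h
  refine ⟨?_, ?_, ?_⟩ <;> rw [← sub_eq_zero, ← mul_self_eq_zero] <;>
    nlinarith [mul_self_nonneg (f {t.1, t.2.1} - f (st t)),
      mul_self_nonneg (f {t.2.1, t.2.2} - f (st t)), mul_self_nonneg (f {t.1, t.2.2} - f (st t))]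

lemma outer_edge (i : Fin 6) : ({hexCorner i, hexCorner (i + 1)} : Set Pt) ∈ LsetH 1 i := by
  refine ⟨Or.inr ⟨sec i, by rw [TriSet_one]; simp, Or.inl rfl⟩, ?_⟩
  rw [convexHull_pair, hexSide]

/-- The conductance of `T_1` is positive: a potential of zero energy would be constant along
the chain of sectors `1, 2, 3`, which joins the two terminals. -/
lemma cond_one_pos : 0 < (RH 1)⁻¹ := by
  obtain ⟨h, C, hR, hC, hA, hB, -, -⟩ := equilibrium 0
  rw [hR, inv_inv]
  have nn : ∀ i ∈ Finset.univ, 0 ≤ bil 0 (sec i) h h := fun i _ => (bil_sos 0 (sec i)).nonneg h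
  refine lt_of_le_of_ne (hC ▸ Finset.sum_nonneg nn) fun e => ?_
  rw [← e, hexForm, Finset.sum_eq_zero_iff_of_nonneg nn] at hC
  obtain ⟨a1, a2, -⟩ := loc_zero (hC 1 (Finset.mem_univ _))
  obtain ⟨-, b2, b3⟩ := loc_zero (hC 2 (Finset.mem_univ _))
  obtain ⟨c1, -, c3⟩ := loc_zero (hC 3 (Finset.mem_univ _))
  have z : h {(sec 1).1, (sec 1).2.1} = 0 := hA _ (Or.inr (outer_edge 1))
  have o : h {(sec 3).1, (sec 3).2.1} = 1 := hB _ (Or.inl (outer_edge 3))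
  have s12 : h {(sec 1).2.1, (sec 1).2.2} = h {(sec 2).1, (sec 2).2.2} := rfl
  have s23 : h {(sec 2).2.1, (sec 2).2.2} = h {(sec 3).1, (sec 3).2.2} := rfl
  linarith

lemma cond_pos (k : ℕ) : 0 < (RH (k + 1))⁻¹ := by
  induction k with
  | zero => exact cond_one_pos
  | succ k ih =>
    have := cond_one_pos
    refine lt_of_lt_of_le ?_ (cond_mul_le k 0 cond_one_pos)
    positivity

end BarycentricHexacarpet

namespace BarycentricHexacarpet

/-- Submultiplicative estimate for the hexacarpet resistances. -/
theorem hexacarpet_submultiplicative (m n : ℕ) (hm : 1 ≤ m) (hn : 1 ≤ n) :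
    RH (m + n) ≤ (4 / 3) * RH m * RH n := by
  obtain ⟨j, rfl⟩ : ∃ j, m = j + 1 := ⟨m - 1, by omega⟩
  obtain ⟨k, rfl⟩ : ∃ k, n = k + 1 := ⟨n - 1, by omega⟩
  have hj := cond_pos j
  have hk := cond_pos k
  have h := inv_anti₀ (by positivity) (cond_mul_le j k hk)
  rw [mul_inv, mul_inv, inv_inv, inv_inv, inv_inv] at h
  linarith

end BarycentricHexacarpet
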